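/- arXiv:2406.05550 — 11 statements merged into one kernel-verified Lean document; each statement's English description precedes it below -/
import Mathlib

section
/- Let k be an algebraically closed field, let A be a finitely generated commutative k-algebra, and let B be a commutative k-algebra. If A and B are both reduced (have no nonzero nilpotent elements), then the tensor product A ⊗ₖ B is reduced. -/
open scoped TensorProduct

/-!
By the Nullstellensatz, the `k`-points `φ : A →ₐ[k] k` of a reduced finitely generated algebra `A`
over an algebraically closed field separate the elements of `A`. Expanding in a basis of `B`, the
induced maps `φ ⊗ id : A ⊗[k] B → k ⊗[k] B ≃ B` separate the elements of `A ⊗[k] B`; they all kill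
nilpotents when `B` is reduced. An arbitrary reduced `A` is the directed union of its finitely
generated subalgebras, and tensoring with `B` preserves this union.
-/

section Free

variable {R M N : Type*} [CommSemiring R] [AddCommMonoid M] [Module R M]
  [AddCommMonoid N] [Module R N]

theorem equivFinsuppOfBasisRight_rTensor_apply {κ P : Type*} [DecidableEq κ] [AddCommMonoid P]
    [Module R P] (b : Module.Basis κ R M) (f : N →ₗ[R] P) (x : N ⊗[R] M) (j : κ) :
    TensorProduct.equivFinsuppOfBasisRight b (f.rTensor M x) j =
      f (TensorProduct.equivFinsuppOfBasisRight b x j) := by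
  induction x with
  | zero => simp
  | add x y hx hy => simp [hx, hy]
  | tmul n m => simp

theorem eq_zero_of_forall_rTensor_eq_zero [Module.Free R M] {ι : Type*}
    {P : ι → Type*} [∀ i, AddCommMonoid (P i)] [∀ i, Module R (P i)] {f : ∀ i, N →ₗ[R] P i}
    (hf : ∀ n, (∀ i, f i n = 0) → n = 0) {x : N ⊗[R] M}
    (hx : ∀ i, (f i).rTensor M x = 0) : x = 0 := by
  classical
  let b := Module.Free.chooseBasis R M
  rw [← (TensorProduct.equivFinsuppOfBasisRight b).map_eq_zero_iff]
  ext j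
  refine hf _ fun i ↦ ?_
  rw [← equivFinsuppOfBasisRight_rTensor_apply, hx, map_zero, Finsupp.zero_apply]

end Free

section Reduced

variable {R A B : Type*} [CommSemiring R] [Semiring A] [Algebra R A] [Semiring B] [Algebra R B]

theorem isReduced_tensorProduct_of_separating_algHom [Module.Free R B] {ι : Type*} {C : ι → Type*}
    [∀ i, Semiring (C i)] [∀ i, Algebra R (C i)] [∀ i, IsReduced (C i ⊗[R] B)]
    {f : ∀ i, A →ₐ[R] C i} (hf : ∀ a, (∀ i, f i a = 0) → a = 0) : IsReduced (A ⊗[R] B) where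
  eq_zero _ hx := eq_zero_of_forall_rTensor_eq_zero (f := fun i ↦ (f i).toLinearMap) hf fun i ↦
    (hx.map (Algebra.TensorProduct.map (f i) (AlgHom.id R B))).eq_zero

theorem exists_fg_mem_range_map_val (x : A ⊗[R] B) :
    ∃ S : Subalgebra R A, S.FG ∧ x ∈ (Algebra.TensorProduct.map S.val (AlgHom.id R B)).range := by
  classical
  obtain ⟨s, rfl⟩ := TensorProduct.exists_finset x
  refine ⟨Algebra.adjoin R (s.image Prod.fst), Subalgebra.fg_adjoin_finset _,
    Subalgebra.sum_mem _ fun p hp ↦ ?_⟩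
  have hp_mem : p.1 ∈ Algebra.adjoin R (s.image Prod.fst : Set A) :=
    Algebra.subset_adjoin (Finset.mem_image_of_mem _ hp)
  exact ⟨⟨p.1, hp_mem⟩ ⊗ₜ p.2, rfl⟩

theorem isReduced_tensorProduct_of_forall_fg_left [Module.Flat R B]
    (h : ∀ S : Subalgebra R A, S.FG → IsReduced (S ⊗[R] B)) : IsReduced (A ⊗[R] B) where
  eq_zero x hx := by
    obtain ⟨S, hS, y, rfl⟩ := exists_fg_mem_range_map_val x
    have := h S hS
    have map_injective : Function.Injective (Algebra.TensorProduct.map S.val (AlgHom.id R B)) :=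
      Module.Flat.rTensor_preserves_injective_linearMap _ Subtype.val_injective
    have hy : IsNilpotent y := (IsNilpotent.map_iff map_injective).mp hx
    rw [hy.eq_zero, map_zero]

end Reduced

section Nullstellensatz

variable {k A : Type*} [Field k] [IsAlgClosed k] [CommRing A] [Algebra k A]
  [Algebra.FiniteType k A]

theorem exists_algHom_ker_eq_of_isMaximal (m : Ideal A) [m.IsMaximal] :
    ∃ φ : A →ₐ[k] k, RingHom.ker φ = m := by
  let _ : Field (A ⧸ m) := Ideal.Quotient.field m
  have : Module.Finite k (A ⧸ m) := finite_of_finite_type_of_isJacobsonRing k (A ⧸ m)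
  let ψ : (A ⧸ m) →ₐ[k] k := IsAlgClosed.lift
  refine ⟨ψ.comp (Ideal.Quotient.mkₐ k m), ?_⟩
  ext a
  exact (map_eq_zero_iff ψ ψ.toRingHom.injective).trans Ideal.Quotient.eq_zero_iff_mem

theorem eq_zero_of_forall_algHom_eq_zero [IsReduced A] {a : A}
    (ha : ∀ φ : A →ₐ[k] k, φ a = 0) : a = 0 := by
  have : IsJacobsonRing A := isJacobsonRing_of_finiteType (A := k)
  have jacobson_bot : (⊥ : Ideal A).jacobson = ⊥ := by
    rw [← Ideal.radical_eq_jacobson]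
    exact nilradical_eq_zero A
  rw [← Ideal.mem_bot, ← jacobson_bot, Ideal.jacobson, Ideal.mem_sInf]
  rintro m ⟨-, hm⟩
  obtain ⟨φ, rfl⟩ := exists_algHom_ker_eq_of_isMaximal (k := k) m
  exact ha φ

end Nullstellensatz

theorem isReduced_tensorProduct_of_isAlgClosed_general (k A B : Type*) [Field k] [IsAlgClosed k]
    [CommRing A] [Algebra k A] [IsReduced A] [Ring B] [Algebra k B] [IsReduced B] :
    IsReduced (A ⊗[k] B) := by
  refine isReduced_tensorProduct_of_forall_fg_left fun S hS ↦ ?_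
  have : Algebra.FiniteType k S := S.fg_iff_finiteType.mp hS
  have : IsReduced S := isReduced_of_injective S.val Subtype.val_injective
  have : IsReduced (k ⊗[k] B) :=
    isReduced_of_injective _ (Algebra.TensorProduct.lid k B).injective
  exact isReduced_tensorProduct_of_separating_algHom (f := fun φ : S →ₐ[k] k ↦ φ)
    fun _ ↦ eq_zero_of_forall_algHom_eq_zero

/-- Let `k` be an algebraically closed field, `A` a finitely generated commutative
`k`-algebra and `B` a commutative `k`-algebra. If `A` and `B` are reduced, then
`A ⊗[k] B` is reduced. -/
theorem isReduced_tensorProduct_of_isAlgClosed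
    (k A B : Type*) [Field k] [IsAlgClosed k]
    [CommRing A] [CommRing B] [Algebra k A] [Algebra k B]
    [Algebra.FiniteType k A] [IsReduced A] [IsReduced B] :
    IsReduced (A ⊗[k] B) :=
  isReduced_tensorProduct_of_isAlgClosed_general k A B
end

section
/- Let k be an algebraically closed field, let A be a finitely generated commutative k-algebra, and let B be a commutative k-algebra. If A and B are both integral domains, then the tensor product A ⊗ₖ B is an integral domain. -/
open scoped TensorProduct

/-!
An element of `A ⊗[k] B` has coefficients in `B` with respect to a `k`-basis of `A`, and a point
`φ : B →ₐ[k] k` induces an algebra homomorphism `A ⊗[k] B →ₐ[k] A` which applies `φ` to them.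
Given nonzero `u` and `v`, choose nonzero coefficients `b` of `u` and `c` of `v`. When `B` is of
finite type, the Nullstellensatz provides a point with `φ (b * c) ≠ 0`; the images of `u` and `v`
under it are nonzero elements of the domain `A`, so `u * v ≠ 0`. An arbitrary `B` is the union of
its finitely generated subalgebras `D`, and `A ⊗[k] D` embeds into `A ⊗[k] B` because `A` is flat.
-/

section Points

variable {k A : Type*} (K : Type*) [Field k] [CommRing A] [Algebra k A] [Algebra.FiniteType k A]
  [Field K] [IsAlgClosed K] [Algebra k K]

theorem nonempty_algHom_of_finiteType [Nontrivial A] : Nonempty (A →ₐ[k] K) := by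
  obtain ⟨m, _⟩ := Ideal.exists_maximal A
  let _ := Ideal.Quotient.field m
  have := finite_of_finite_type_of_isJacobsonRing k (A ⧸ m)
  exact ⟨(IsAlgClosed.lift : A ⧸ m →ₐ[k] K).comp (Ideal.Quotient.mkₐ k m)⟩

theorem exists_algHom_apply_ne_zero_of_not_isNilpotent {a : A} (ha : ¬IsNilpotent a) :
    ∃ φ : A →ₐ[k] K, φ a ≠ 0 := by
  let S := Localization.Away a
  have : Nontrivial S := by
    rw [← not_subsingleton_iff_nontrivial, IsLocalization.subsingleton_iff (M := .powers a)]
    exact ha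
  have : Algebra.FiniteType A S := IsLocalization.finiteType_of_monoid_fg (.powers a) S
  have : Algebra.FiniteType k S := .trans ‹_› this
  obtain ⟨φ⟩ := nonempty_algHom_of_finiteType (k := k) (A := S) K
  have hunit : IsUnit (algebraMap A S a) := IsLocalization.Away.algebraMap_isUnit a
  exact ⟨φ.comp (IsScalarTower.toAlgHom k A S), (hunit.map φ).ne_zero⟩

end Points

section Specialization

variable {R A B : Type*} [CommSemiring R] [CommSemiring A] [Semiring B] [Algebra R A] [Algebra R B]

variable (A) in
/-- The specialization of `A ⊗[R] B` at an `R`-point `φ` of `B`, that is, the `A`-algebra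
homomorphism `a ⊗ b ↦ φ b • a`. Geometrically it restricts functions on `Spec A × Spec B` to the
slice `Spec A × {φ}`. -/
noncomputable def specializeRight (φ : B →ₐ[R] R) : A ⊗[R] B →ₐ[A] A :=
  (Algebra.TensorProduct.rid R A A).toAlgHom.comp (Algebra.TensorProduct.map (.id A A) φ)

@[simp]
theorem specializeRight_tmul (φ : B →ₐ[R] R) (a : A) (b : B) :
    specializeRight A φ (a ⊗ₜ b) = φ b • a := by
  simp [specializeRight]

theorem repr_specializeRight {ι : Type*} [DecidableEq ι] (e : Module.Basis ι R A) (φ : B →ₐ[R] R)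
    (u : A ⊗[R] B) (i : ι) :
    e.repr (specializeRight A φ u) i = φ (TensorProduct.equivFinsuppOfBasisLeft e u i) := by
  induction u with
  | zero => simp
  | add u v hu hv => simp [hu, hv]
  | tmul a b => simp [mul_comm]

theorem exists_ne_zero_forall_specializeRight_ne_zero [Module.Free R A] {u : A ⊗[R] B}
    (hu : u ≠ 0) :
    ∃ b : B, b ≠ 0 ∧ ∀ φ : B →ₐ[R] R, φ b ≠ 0 → specializeRight A φ u ≠ 0 := by
  classical
  let e := Module.Free.chooseBasis R A
  let coeff := TensorProduct.equivFinsuppOfBasisLeft (N := B) e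
  obtain ⟨i, hi⟩ : ∃ i, coeff u i ≠ 0 :=
    Finsupp.ne_iff.mp (coeff.map_ne_zero_iff.mpr hu)
  refine ⟨coeff u i, hi, fun φ hφ h ↦ hφ ?_⟩
  rw [← repr_specializeRight, h, map_zero, Finsupp.zero_apply]

theorem noZeroDivisors_tensorProduct_of_forall_exists_algHom_ne_zero [Module.Free R A]
    [NoZeroDivisors A] [NoZeroDivisors B] (h : ∀ b : B, b ≠ 0 → ∃ φ : B →ₐ[R] R, φ b ≠ 0) :
    NoZeroDivisors (A ⊗[R] B) := by
  refine ⟨fun {u v} huv ↦ ?_⟩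
  by_contra! ⟨hu, hv⟩
  obtain ⟨b, hb, hbu⟩ := exists_ne_zero_forall_specializeRight_ne_zero hu
  obtain ⟨c, hc, hcv⟩ := exists_ne_zero_forall_specializeRight_ne_zero hv
  obtain ⟨φ, hφ⟩ := h (b * c) (mul_ne_zero hb hc)
  rw [map_mul] at hφ
  apply mul_ne_zero (hbu φ (left_ne_zero_of_mul hφ)) (hcv φ (right_ne_zero_of_mul hφ))
  rw [← map_mul, huv, map_zero]

end Specialization

section Descent

variable {R A B : Type*} [CommSemiring R] [CommSemiring A] [Semiring B] [Algebra R A] [Algebra R B]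

theorem subalgebra_baseChange_mono {D E : Subalgebra R B} (h : D ≤ E) :
    D.baseChange A ≤ E.baseChange A := by
  rintro _ ⟨u, rfl⟩
  refine ⟨Algebra.TensorProduct.map (.id A A) (Subalgebra.inclusion h) u, ?_⟩
  induction u with
  | zero => simp
  | add u v hu hv => simp_all
  | tmul a d => simp

theorem noZeroDivisors_tensorProduct_of_flat_of_forall_fg [Module.Flat R A]
    (h : ∀ D : Subalgebra R B, D.FG → NoZeroDivisors (A ⊗[R] D)) :
    NoZeroDivisors (A ⊗[R] B) := by
  refine ⟨fun {u v} huv ↦ ?_⟩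
  obtain ⟨D, hD, hu⟩ := exists_fg_and_mem_baseChange u
  obtain ⟨E, hE, hv⟩ := exists_fg_and_mem_baseChange v
  let F := D ⊔ E
  let ι := Algebra.TensorProduct.map (.id A A) F.val
  have hι : Function.Injective ι :=
    Module.Flat.lTensor_preserves_injective_linearMap _ Subtype.val_injective
  obtain ⟨u, rfl⟩ : u ∈ ι.range := subalgebra_baseChange_mono le_sup_left hu
  obtain ⟨v, rfl⟩ : v ∈ ι.range := subalgebra_baseChange_mono le_sup_right hv
  have := h F (hD.sup hE)
  simpa [← map_mul, map_eq_zero_iff ι hι] using huv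

end Descent

theorem isDomain_tensorProduct_of_isAlgClosed_general (k A B : Type*) [Field k] [IsAlgClosed k]
    [CommRing A] [CommRing B] [Algebra k A] [Algebra k B] [IsDomain A] [IsDomain B] :
    IsDomain (A ⊗[k] B) := by
  have : NoZeroDivisors (A ⊗[k] B) := by
    refine noZeroDivisors_tensorProduct_of_flat_of_forall_fg fun D hD ↦ ?_
    have : Algebra.FiniteType k D := D.fg_iff_finiteType.mp hD
    refine noZeroDivisors_tensorProduct_of_forall_exists_algHom_ne_zero fun b hb ↦ ?_
    exact exists_algHom_apply_ne_zero_of_not_isNilpotent k (mt IsNilpotent.eq_zero hb)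
  exact NoZeroDivisors.to_isDomain _

/-- Let `k` be an algebraically closed field, `A` a finitely generated commutative
`k`-algebra and `B` a commutative `k`-algebra. If `A` and `B` are integral
domains, then `A ⊗[k] B` is an integral domain. -/
theorem isDomain_tensorProduct_of_isAlgClosed
    (k A B : Type*) [Field k] [IsAlgClosed k]
    [CommRing A] [CommRing B] [Algebra k A] [Algebra k B]
    [Algebra.FiniteType k A] [IsDomain A] [IsDomain B] :
    IsDomain (A ⊗[k] B) :=
  isDomain_tensorProduct_of_isAlgClosed_general k A B
end

section
/- Let k be a separably closed field and let V be a scheme of finite type and separated over k that is geometrically reduced (i.e., V ×_{Spec k} Spec K is reduced for some/every algebraically closed field extension K of k). Then the set of k-rational points of V, i.e., the set of images in the underlying topological space of V of all k-morphisms Spec k → V, is dense in the underlying topological space of V (for the Zariski topology). -/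
open AlgebraicGeometry CategoryTheory CategoryTheory.Limits

/-!
Let `K` be a perfect extension of `k` such that the base change of `V` to `K` is reduced, and let
`L` be the local ring of `V` at the generic point of a component, a field. In characteristic `p`,
extracting `p`-th roots of coefficients in `K` and using that `K ⊗[k] L` is reduced, one sees that
`p`-th powers of `k`-linearly independent elements of `L` remain independent. By MacLane's
criterion `L` is then separably generated over `k`, so `V` is smooth at that generic point and,
locally, étale over an affine space. The image of an étale map is open, so it contains a rational
point, `k` being infinite. The residue field extensions of an étale map are separable, so this point
lifts to a rational point of `V`.
-/

universe u

section ReducedBaseChange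

open TensorProduct

lemma linearIndependent_one_tmul {R S M ι : Type*} [CommRing R] [CommRing S] [Algebra R S]
    [Module.Flat R S] [AddCommGroup M] [Module R M] {v : ι → M} (hv : LinearIndependent R v) :
    LinearIndependent S fun i ↦ (1 : S) ⊗ₜ[R] v i := by
  have hinj : Function.Injective ((Finsupp.linearCombination R v).baseChange S) :=
    Module.Flat.lTensor_preserves_injective_linearMap _ hv
  simpa [Function.comp_def] using
    ((Finsupp.basisSingleOne (R := R)).baseChange S).linearIndependent.map'
      _ (LinearMap.ker_eq_bot.2 hinj)

variable {k : Type*} (K : Type*) [Field k] [Field K] [Algebra k K] [PerfectField K]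

include K in
lemma linearIndependent_pow_expChar_of_isReduced_tensorProduct {A ι : Type*} [CommRing A]
    [Algebra k A] [IsReduced (K ⊗[k] A)] (p : ℕ) [ExpChar k p] {v : ι → A}
    (hv : LinearIndependent k v) : LinearIndependent k fun i ↦ v i ^ p := by
  cases subsingleton_or_nontrivial A
  · convert! hv
  have : ExpChar K p := expChar_of_injective_algebraMap (algebraMap k K).injective p
  have : ExpChar (K ⊗[k] A) p :=
    expChar_of_injective_algebraMap (algebraMap k (K ⊗[k] A)).injective p
  have hK : LinearIndependent K fun i ↦ ((1 : K) ⊗ₜ[k] v i) ^ p := by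
    refine (linearIndependent_one_tmul (S := K) hv).map_of_injective_injectiveₛ
      (frobeniusEquiv K p).symm (frobenius (K ⊗[k] A) p).toAddMonoidHom
      (frobeniusEquiv K p).symm.injective (frobenius_inj _ p) fun c x ↦ ?_
    change frobenius _ p _ = c • frobenius _ p x
    simp only [Algebra.smul_def, map_mul, ← RingHom.map_frobenius,
      frobenius_apply_frobeniusEquiv_symm]
  refine .of_comp (Algebra.TensorProduct.includeRight : A →ₐ[k] K ⊗[k] A).toLinearMap ?_
  simpa [Function.comp_def, Algebra.TensorProduct.tmul_pow] using hK.restrict_scalars' k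

include K in
lemma formallySmooth_of_isReduced_tensorProduct {L : Type*} [Field L] [Algebra k L]
    [Algebra.EssFiniteType k L] [IsReduced (K ⊗[k] L)] :
    Algebra.FormallySmooth k L := by
  obtain _ | ⟨p, hp, _⟩ := CharP.exists' k
  · infer_instance
  · have : ExpChar k p := .prime hp.out
    obtain ⟨s, hs, hsep⟩ :=
      exists_isTranscendenceBasis_and_isSeparable_of_linearIndepOn_pow_of_essFiniteType (k := k)
        (K := L) p hp.out fun _ ht ↦ linearIndependent_pow_expChar_of_isReduced_tensorProduct K p ht
    have : Algebra.IsSeparable (IntermediateField.adjoin k (Set.range ((↑) : s → L))) L := by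
      convert! hsep <;> simp
    exact .of_algebraicIndependent_of_isSeparable hs.1

lemma isReduced_tensorProduct_of_isLocalization {R S A : Type*} (B : Type*) [CommRing R]
    [CommRing S] [CommRing A] [CommRing B] [Algebra R S] [Algebra R A] [Algebra R B]
    [Algebra A B] [IsScalarTower R A B] (M : Submonoid A) [IsLocalization M B]
    [IsReduced (S ⊗[R] A)] : IsReduced (S ⊗[R] B) :=
  let : Algebra (S ⊗[R] A) (S ⊗[R] B) :=
    (Algebra.TensorProduct.map (AlgHom.id S S) (IsScalarTower.toAlgHom R A B)).toAlgebra
  let M' := M.map (Algebra.TensorProduct.includeRight (R := R) (A := S))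
  have : IsScalarTower S (S ⊗[R] A) (S ⊗[R] B) := .of_algebraMap_eq fun _ ↦ by
    simp [RingHom.algebraMap_toAlgebra]
  have : IsLocalization M' (S ⊗[R] B) :=
    IsLocalization.tensorProduct_tensorProduct_right R S M B <| by
      ext
      simp [RingHom.algebraMap_toAlgebra]
  isReduced_of_injective (IsLocalization.algEquiv M' (S ⊗[R] B) (Localization M'))
    (AlgEquiv.injective _)

include K in
lemma isSmoothAt_of_mem_minimalPrimes {A : Type*} [CommRing A] [Algebra k A]
    [Algebra.EssFiniteType k A] [IsReduced (K ⊗[k] A)] (p : Ideal A) [p.IsPrime]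
    (hp : p ∈ minimalPrimes A) : Algebra.IsSmoothAt k p := by
  have : IsReduced A := isReduced_of_injective
    (Algebra.TensorProduct.includeRight : A →ₐ[k] K ⊗[k] A)
    (Algebra.TensorProduct.includeRight_injective (algebraMap k K).injective)
  have : Ring.KrullDimLE 0 (Localization.AtPrime p) := .of_isLocalization p hp _
  let : Field (Localization.AtPrime p) := Ring.KrullDimLE.isField_of_isReduced.toField
  have : IsReduced (K ⊗[k] Localization.AtPrime p) :=
    isReduced_tensorProduct_of_isLocalization _ p.primeCompl
  have : Algebra.EssFiniteType k (Localization.AtPrime p) := .comp k A _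
  exact formallySmooth_of_isReduced_tensorProduct K

end ReducedBaseChange

section SepClosed

lemma infinite_of_isSepClosed (k : Type*) [Field k] [IsSepClosed k] : Infinite k := by
  by_contra h
  have : Finite k := not_infinite_iff_finite.mp h
  exact h inferInstance

lemma exists_comap_eval_bot_mem_of_isOpen {σ k : Type*} [Field k] [Infinite k]
    {U : Set (PrimeSpectrum (MvPolynomial σ k))} (hU : IsOpen U) (hne : U.Nonempty) :
    ∃ a : σ → k, PrimeSpectrum.comap (MvPolynomial.eval a) ⊥ ∈ U := by
  obtain ⟨x, hx⟩ := hne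
  obtain ⟨_, ⟨_, ⟨g, rfl⟩, rfl⟩, hxg, hgU⟩ :=
    PrimeSpectrum.isBasis_basic_opens.exists_subset_of_mem_open hx hU
  have hg : g ≠ 0 := by
    rintro rfl
    simp at hxg
  obtain ⟨a, ha⟩ : ∃ a, MvPolynomial.eval a g ≠ 0 := by
    by_contra! h
    exact hg (MvPolynomial.funext (by simpa using h))
  exact ⟨a, hgU (by simpa using ha)⟩

variable {k : Type u} [Field k] [IsSepClosed k]

lemma exists_section_of_etale_mvPolynomial {n : ℕ} {X : Scheme.{u}} [Nonempty X]
    (f : X ⟶ Spec (.of (MvPolynomial (Fin n) k))) [Etale f] :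
    ∃ s : Spec (.of k) ⟶ X, s ≫ f ≫ Spec.map (CommRingCat.ofHom MvPolynomial.C) = 𝟙 _ := by
  have := infinite_of_isSepClosed k
  obtain ⟨a, x, hx⟩ := exists_comap_eval_bot_mem_of_isOpen f.isOpenMap.isOpen_range
    (Set.range_nonempty f)
  let evalPoint : Spec (.of k) ⟶ Spec (.of (MvPolynomial (Fin n) k)) :=
    Spec.map (CommRingCat.ofHom (MvPolynomial.eval a))
  have hx' : f x = evalPoint default := hx.trans (congrArg evalPoint (Subsingleton.elim _ _))
  obtain ⟨s, hs, -⟩ := Scheme.exists_fac_of_etale_of_isSepClosed f evalPoint x hx'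
  refine ⟨s, ?_⟩
  rw [reassoc_of% hs, ← Spec.map_comp, ← Spec.map_id]
  congr 1
  ext x
  simp

lemma exists_section_of_isSmoothAt {A : Type u} [CommRing A] [Algebra k A]
    [Algebra.FinitePresentation k A] (p : Ideal A) [p.IsPrime] [Algebra.IsSmoothAt k p] :
    ∃ s : Spec (.of k) ⟶ Spec (.of A), s ≫ Spec.map (CommRingCat.ofHom (algebraMap k A)) = 𝟙 _ := by
  obtain ⟨r, hr, n, _, _, _⟩ :=
    Algebra.IsSmoothAt.exists_isStandardEtale_mvPolynomial (R := k) (p := p)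
  have : Nontrivial (Localization.Away r) := by
    rw [← not_subsingleton_iff_nontrivial, IsLocalization.subsingleton_iff (M := .powers r)]
    exact fun h0 ↦ (Submonoid.powers_le (P := p.primeCompl)).mpr hr h0 p.zero_mem
  let f : Spec (.of (Localization.Away r)) ⟶ Spec (.of (MvPolynomial (Fin n) k)) :=
    Spec.map (CommRingCat.ofHom (algebraMap _ _))
  have : Etale f := HasRingHomProperty.Spec_iff.mpr
    (RingHom.etale_algebraMap.mpr inferInstance)
  obtain ⟨s, hs⟩ := exists_section_of_etale_mvPolynomial f
  refine ⟨s ≫ Spec.map (CommRingCat.ofHom (algebraMap A (Localization.Away r))), ?_⟩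
  rw [← hs, Category.assoc, ← Spec.map_comp, ← Spec.map_comp, ← CommRingCat.ofHom_comp,
    ← CommRingCat.ofHom_comp, ← IsScalarTower.algebraMap_eq, ← MvPolynomial.algebraMap_eq,
    ← IsScalarTower.algebraMap_eq]

lemma isReduced_pullback_comp_of_isOpenImmersion {U X Y S : Scheme.{u}} (j : U ⟶ X)
    [IsOpenImmersion j] (f : X ⟶ S) (g : Y ⟶ S) [IsReduced (pullback f g)] :
    IsReduced (pullback (j ≫ f) g) :=
  isReduced_of_isOpenImmersion (pullback.map (j ≫ f) g f g j (𝟙 _) (𝟙 _) (by simp) (by simp))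

open TensorProduct in
lemma exists_section_of_isReduced_pullback {R : CommRingCat.{u}} [Nontrivial R]
    (f : Spec R ⟶ Spec (.of k)) [LocallyOfFiniteType f]
    (K : Type u) [Field K] [Algebra k K] [PerfectField K]
    [IsReduced (pullback f (Spec.map (CommRingCat.ofHom (algebraMap k K))))] :
    ∃ s : Spec (.of k) ⟶ Spec R, s ≫ f = 𝟙 _ := by
  obtain ⟨φ, rfl⟩ := Spec.map_surjective f
  have : φ.hom.FiniteType := (HasRingHomProperty.Spec_iff (P := @LocallyOfFiniteType)).mp ‹_›
  algebraize [φ.hom]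
  have : Algebra.FinitePresentation k R := Algebra.FinitePresentation.of_finiteType.mp ‹_›
  have : IsReduced (K ⊗[k] R) := by
    have : IsReduced (Spec (.of (R ⊗[k] K))) :=
      isReduced_of_isOpenImmersion (pullbackSpecIso k R K).inv
    have : IsReduced (R ⊗[k] K) := (affine_isReduced_iff _).mp this
    exact isReduced_of_injective (Algebra.TensorProduct.comm k K R) (AlgEquiv.injective _)
  obtain ⟨p, hp⟩ := Ideal.nonempty_minimalPrimes (R := R) bot_ne_top
  have : p.IsPrime := hp.1.1
  have : Algebra.IsSmoothAt k p := isSmoothAt_of_mem_minimalPrimes K p hp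
  exact exists_section_of_isSmoothAt p

end SepClosed

theorem dense_rationalPoints_of_isSepClosed_general
    {k : Type u} [Field k] [IsSepClosed k]
    (V : Scheme.{u}) (f : V ⟶ Spec (CommRingCat.of k)) [LocallyOfFiniteType f]
    (K : Type u) [Field K] [Algebra k K] [PerfectField K]
    [IsReduced (pullback f (Spec.map (CommRingCat.ofHom (algebraMap k K))))] :
    Dense {x : V | ∃ p : Spec (CommRingCat.of k) ⟶ V,
      p ≫ f = 𝟙 (Spec (CommRingCat.of k)) ∧ x ∈ Set.range p.base} := by
  rw [dense_iff_inter_open]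
  rintro U hU ⟨x, hxU⟩
  obtain ⟨R, j, _, ⟨y, -⟩, hjU⟩ :=
    Scheme.exists_affine_mem_range_and_range_subset (U := ⟨U, hU⟩) hxU
  have : Nontrivial R := PrimeSpectrum.nonempty_iff_nontrivial.mp ⟨y⟩
  have := isReduced_pullback_comp_of_isOpenImmersion j f
    (Spec.map (CommRingCat.ofHom (algebraMap k K)))
  obtain ⟨s, hs⟩ := exists_section_of_isReduced_pullback (j ≫ f) K
  exact ⟨(s ≫ j) default, hjU ⟨s default, rfl⟩, s ≫ j, by simpa using hs, default, rfl⟩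

/-- Let `k` be a separably closed field and let `V` be a geometrically reduced
algebraic scheme over `k` (separated and of finite type, with reduced base change
to every algebraically closed extension of `k`).  Then the set of `k`-rational
points of `V` (images of `k`-morphisms `Spec k ⟶ V`) is dense in the underlying
topological space of `V`. -/
theorem dense_rationalPoints_of_isSepClosed
    {k : Type u} [Field k] [IsSepClosed k]
    (V : Scheme.{u}) (f : V ⟶ Spec (CommRingCat.of k))
    [IsSeparated f] [LocallyOfFiniteType f] [QuasiCompact f]
    (hgeom : ∀ (K : Type u) [Field K] [Algebra k K] [IsAlgClosed K],
      IsReduced (pullback f (Spec.map (CommRingCat.ofHom (algebraMap k K))))) :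
    Dense {x : V | ∃ p : Spec (CommRingCat.of k) ⟶ V,
      p ≫ f = 𝟙 (Spec (CommRingCat.of k)) ∧ x ∈ Set.range p.base} := by
  have := hgeom (AlgebraicClosure k)
  exact dense_rationalPoints_of_isSepClosed_general V f (AlgebraicClosure k)
end

section
/- Let Ω ⊇ k be fields, let M be an Ω-vector space, and let V be a k-subspace (k-submodule) of M such that the canonical map Ω ⊗ₖ V → M, c ⊗ v ↦ c • v, is bijective. Let W be an Ω-subspace of M. Then: (i) there exists at most one k-subspace W₀ of V such that the map Ω ⊗ₖ W₀ → M, c ⊗ w ↦ c • w, is injective with image exactly W; (ii) such a W₀ exists if and only if W equals the Ω-span of the set V ∩ W, in which case W₀ = V ∩ W. -/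
open scoped TensorProduct

/-- For a `k`-subspace `V` of an `Ω`-vector space `M`, the canonical map
`Ω ⊗[k] V → M`, `c ⊗ v ↦ c • v`. -/
noncomputable def Submodule.expansionMap
    (k Ω M : Type*) [Field k] [Field Ω] [Algebra k Ω]
    [AddCommGroup M] [Module k M] [Module Ω M] [IsScalarTower k Ω M]
    (V : Submodule k M) : (Ω ⊗[k] V) →ₗ[k] M :=
  TensorProduct.lift
    { toFun := fun c => c • (V.subtype)
      map_add' := fun c c' => by simp [add_smul]
      map_smul' := fun a c => by simp [smul_assoc] }

/-!
Faithful flatness makes `U ↦ U.baseChange A` an order embedding into the `A`-submodules of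
`A ⊗[R] V`, and an injective canonical map `A ⊗[R] V → M` carries these to the spans `span A U`.
Since `V ⊓ span A U` has the same span as `U`, the two are equal, so `U` is recovered from its
span.
-/

section Semiring

variable {R A N M P : Type*} [CommSemiring R] [CommSemiring A] [Algebra R A]
  [AddCommMonoid N] [Module R N] [AddCommMonoid P] [Module R P]
  [AddCommMonoid M] [Module R M] [Module A M] [IsScalarTower R A M]

theorem liftBaseChange_comp_baseChange (f : N →ₗ[R] M) (g : P →ₗ[R] N) :
    f.liftBaseChange A ∘ₗ g.baseChange A = (f ∘ₗ g).liftBaseChange A := by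
  ext
  simp

theorem injective_liftBaseChange_comp [Module.Flat R A] {f : N →ₗ[R] M} {g : P →ₗ[R] N}
    (hf : Function.Injective (f.liftBaseChange A)) (hg : Function.Injective g) :
    Function.Injective ((f ∘ₗ g).liftBaseChange A) := by
  rw [← liftBaseChange_comp_baseChange, LinearMap.coe_comp, LinearMap.baseChange_eq_ltensor]
  exact hf.comp (Module.Flat.lTensor_preserves_injective_linearMap g hg)

theorem map_liftBaseChange_baseChange (f : N →ₗ[R] M) (p : Submodule R N) :
    (p.baseChange A).map (f.liftBaseChange A) = Submodule.span A (p.map f : Set M) := by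
  rw [Submodule.baseChange, ← LinearMap.range_comp, liftBaseChange_comp_baseChange,
    LinearMap.range_liftBaseChange, LinearMap.range_comp, Submodule.range_subtype]

theorem range_liftBaseChange_subtype (U : Submodule R M) :
    LinearMap.range (U.subtype.liftBaseChange A) = Submodule.span A (U : Set M) := by
  rw [LinearMap.range_liftBaseChange, Submodule.range_subtype]

end Semiring

section Ring

variable {R A N M : Type*} [CommRing R] [CommRing A] [Algebra R A] [Module.FaithfullyFlat R A]
  [AddCommGroup N] [Module R N]
  [AddCommGroup M] [Module R M] [Module A M] [IsScalarTower R A M]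

theorem span_map_le_span_map_iff {f : N →ₗ[R] M} (hf : Function.Injective (f.liftBaseChange A))
    {p q : Submodule R N} :
    Submodule.span A (p.map f : Set M) ≤ Submodule.span A (q.map f : Set M) ↔ p ≤ q := by
  rw [← map_liftBaseChange_baseChange, ← map_liftBaseChange_baseChange,
    Submodule.map_le_map_iff_of_injective hf, Submodule.baseChange_le_iff]

theorem comap_span_map_eq_self {f : N →ₗ[R] M} (hf : Function.Injective (f.liftBaseChange A))
    (p : Submodule R N) :
    ((Submodule.span A (p.map f : Set M)).restrictScalars R).comap f = p := by
  apply le_antisymm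
  · rw [← span_map_le_span_map_iff hf, Submodule.span_le]
    exact Submodule.map_comap_le f _
  · exact Submodule.map_le_iff_le_comap.mp Submodule.subset_span

theorem inf_span_eq_of_le {U V : Submodule R M}
    (hV : Function.Injective (V.subtype.liftBaseChange A)) (hUV : U ≤ V) :
    V ⊓ (Submodule.span A (U : Set M)).restrictScalars R = U := by
  have hU : (U.submoduleOf V).map V.subtype = U := by
    rw [Submodule.submoduleOf, Submodule.map_comap_subtype, inf_eq_right.mpr hUV]
  have hcomap := comap_span_map_eq_self hV (U.submoduleOf V)
  rw [hU] at hcomap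
  rw [← Submodule.map_comap_subtype, hcomap, hU]

theorem submodule_descend_unique_exists_general {V : Submodule R M}
    (hV : Function.Injective (V.subtype.liftBaseChange A)) (W : Submodule A M) :
    (∀ W₀ ≤ V, LinearMap.range (W₀.subtype.liftBaseChange A) = W →
      W₀ = V ⊓ W.restrictScalars R) ∧
    ((∃ W₀ ≤ V, Function.Injective (W₀.subtype.liftBaseChange A) ∧
        LinearMap.range (W₀.subtype.liftBaseChange A) = W) ↔
      Submodule.span A ((V ⊓ W.restrictScalars R : Submodule R M) : Set M) = W) := by
  simp only [range_liftBaseChange_subtype]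
  have eq_inf : ∀ W₀ ≤ V, Submodule.span A (W₀ : Set M) = W → W₀ = V ⊓ W.restrictScalars R := by
    rintro W₀ hW₀ rfl
    exact (inf_span_eq_of_le hV hW₀).symm
  refine ⟨eq_inf, ?_, fun hW ↦ ⟨_, inf_le_left, ?_, hW⟩⟩
  · rintro ⟨W₀, hW₀, -, hspan⟩
    rwa [← eq_inf W₀ hW₀ hspan]
  · rw [← Submodule.subtype_comp_inclusion _ V inf_le_left]
    exact injective_liftBaseChange_comp hV (Submodule.inclusion_injective inf_le_left)

end Ring

theorem coe_expansionMap (k Ω M : Type*) [Field k] [Field Ω] [Algebra k Ω]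
    [AddCommGroup M] [Module k M] [Module Ω M] [IsScalarTower k Ω M] (V : Submodule k M) :
    ⇑(Submodule.expansionMap k Ω M V) = V.subtype.liftBaseChange Ω :=
  rfl

/-- Let `Ω ⊇ k` be fields, `M` an `Ω`-vector space and `V` a `k`-subspace of `M`
such that the canonical map `Ω ⊗[k] V → M` is bijective.  Let `W` be an
`Ω`-subspace of `M`.  Then (i) there is at most one `k`-subspace `W₀` of `V` such
that `Ω ⊗[k] W₀ → M` is injective with image exactly `W`; (ii) such a `W₀`
exists if and only if `W` is the `Ω`-span of `V ∩ W`, in which case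
`W₀ = V ∩ W`. -/
theorem submodule_descend_unique_exists
    (k Ω M : Type*) [Field k] [Field Ω] [Algebra k Ω]
    [AddCommGroup M] [Module k M] [Module Ω M] [IsScalarTower k Ω M]
    (V : Submodule k M) (hV : Function.Bijective (Submodule.expansionMap k Ω M V))
    (W : Submodule Ω M) :
    (∀ W₀ W₀' : Submodule k M, W₀ ≤ V → W₀' ≤ V →
        (Function.Injective (Submodule.expansionMap k Ω M W₀) ∧
          Set.range (Submodule.expansionMap k Ω M W₀) = (W : Set M)) →
        (Function.Injective (Submodule.expansionMap k Ω M W₀') ∧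
          Set.range (Submodule.expansionMap k Ω M W₀') = (W : Set M)) →
        W₀ = W₀') ∧
    ((∃ W₀ : Submodule k M, W₀ ≤ V ∧
        Function.Injective (Submodule.expansionMap k Ω M W₀) ∧
        Set.range (Submodule.expansionMap k Ω M W₀) = (W : Set M)) ↔
      Submodule.span Ω ((V ⊓ W.restrictScalars k : Submodule k M) : Set M) = W) ∧
    (∀ W₀ : Submodule k M, W₀ ≤ V →
        Function.Injective (Submodule.expansionMap k Ω M W₀) →
        Set.range (Submodule.expansionMap k Ω M W₀) = (W : Set M) →
        W₀ = V ⊓ W.restrictScalars k) := by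
  simp only [coe_expansionMap, ← LinearMap.coe_range, SetLike.coe_set_eq] at hV ⊢
  obtain ⟨eq_inf, exists_iff⟩ := submodule_descend_unique_exists_general hV.injective W
  exact ⟨fun _ _ h h' hr hr' ↦ (eq_inf _ h hr.2).trans (eq_inf _ h' hr'.2).symm,
    exists_iff, fun _ h _ ↦ eq_inf _ h⟩
end

section
/- Let Ω ⊇ k be fields such that k is the fixed field of Γ = Aut(Ω/k), the group of field automorphisms of Ω fixing k pointwise. Let V be a k-vector space, and let Γ act on Ω ⊗ₖ V by σ(c ⊗ v) = σ(c) ⊗ v for σ ∈ Γ, c ∈ Ω, v ∈ V. Then the set of elements of Ω ⊗ₖ V fixed by every σ ∈ Γ equals the image of V under the map v ↦ 1 ⊗ v. -/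
open scoped TensorProduct

/-!
Contracting `x : M ⊗[R] P` with a functional on `P` commutes with every linear map acting on the
left factor, so the contractions of a fixed `x` are fixed elements of `M`. When `P` is projective, a
dual basis writes `x` as a finite sum `∑ mₚ ⊗ₜ p` whose coefficients `mₚ` are such contractions.
-/

namespace TensorContraction

variable {R M N P : Type*} [CommSemiring R] [AddCommMonoid M] [AddCommMonoid N] [AddCommMonoid P]
  [Module R M] [Module R N] [Module R P]

/-- The contraction `m ⊗ₜ p ↦ φ p • m` of the right tensor factor with a functional `φ`, used to
read off the coefficients in `M` of an element of `M ⊗[R] P`. -/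
def contractRight (M : Type*) [AddCommMonoid M] [Module R M] (φ : Module.Dual R P) :
    M ⊗[R] P →ₗ[R] M :=
  TensorProduct.rid R M ∘ₗ φ.lTensor M

theorem contractRight_rTensor (f : M →ₗ[R] N) (φ : Module.Dual R P) (x : M ⊗[R] P) :
    contractRight N φ (f.rTensor P x) = f (contractRight M φ x) := by
  induction x with
  | zero => simp only [map_zero]
  | tmul m p => simp [contractRight]
  | add x y hx hy => simp only [map_add, hx, hy]

theorem lTensor_linearCombination_finsuppScalarRight_symm {ι : Type*} [DecidableEq ι] (v : ι → P)
    (y : ι →₀ M) :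
    (Finsupp.linearCombination R v).lTensor M ((TensorProduct.finsuppScalarRight R R M ι).symm y) =
      y.sum fun i m ↦ m ⊗ₜ[R] v i := by
  induction y using Finsupp.induction_linear with
  | zero => simp
  | add y z hy hz =>
    rw [map_add, map_add, hy, hz, Finsupp.sum_add_index'] <;> simp [TensorProduct.add_tmul]
  | single i m => simp

theorem exists_sum_contractRight_tmul_eq [Module.Projective R P] (x : M ⊗[R] P) :
    ∃ (t : Finset P) (φ : P → Module.Dual R P), ∑ p ∈ t, contractRight M (φ p) x ⊗ₜ[R] p = x := by
  classical
  obtain ⟨s, hs⟩ := Module.projective_def'.mp (inferInstance : Module.Projective R P)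
  let e := TensorProduct.finsuppScalarRight R R M P
  let φ (p : P) : Module.Dual R P := Finsupp.lapply p ∘ₗ s
  have coeff_eq (p : P) : e (s.lTensor M x) p = contractRight M (φ p) x := by
    rw [TensorProduct.finsuppScalarRight_apply, contractRight, LinearMap.comp_apply,
      LinearMap.lTensor_comp_apply]
    rfl
  refine ⟨(e (s.lTensor M x)).support, φ, ?_⟩
  calc
    ∑ p ∈ (e (s.lTensor M x)).support, contractRight M (φ p) x ⊗ₜ[R] p
        = (e (s.lTensor M x)).sum fun p m ↦ m ⊗ₜ[R] p := by simp only [Finsupp.sum, coeff_eq]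
    _ = (Finsupp.linearCombination R id).lTensor M (s.lTensor M x) := by
      simpa [e] using
        (lTensor_linearCombination_finsuppScalarRight_symm (R := R) id (e (s.lTensor M x))).symm
    _ = x := by rw [← LinearMap.lTensor_comp_apply, hs, LinearMap.lTensor_id_apply]

theorem mem_range_rTensor_of_contractRight_mem_range [Module.Projective R P] (f : M →ₗ[R] N)
    {x : N ⊗[R] P} (hx : ∀ φ : Module.Dual R P, contractRight N φ x ∈ f.range) :
    x ∈ (f.rTensor P).range := by
  obtain ⟨s, φ, hsum⟩ := exists_sum_contractRight_tmul_eq x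
  rw [← hsum]
  refine Submodule.sum_mem _ fun p _ ↦ ?_
  obtain ⟨m, hm⟩ := hx (φ p)
  exact ⟨m ⊗ₜ p, by rw [LinearMap.rTensor_tmul, hm]⟩

theorem iInf_eqLocus_rTensor_eq_range {ι L : Type*} [AddCommMonoid L] [Module R L]
    [Module.Projective R P] {f g : ι → N →ₗ[R] L} {j : M →ₗ[R] N}
    (hj : ⨅ i, LinearMap.eqLocus (f i) (g i) = j.range) :
    ⨅ i, LinearMap.eqLocus ((f i).rTensor P) ((g i).rTensor P) = (j.rTensor P).range := by
  apply le_antisymm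
  · intro x hx
    refine mem_range_rTensor_of_contractRight_mem_range j fun φ ↦ ?_
    rw [← hj]
    simp only [Submodule.mem_iInf, LinearMap.mem_eqLocus] at hx ⊢
    intro i
    rw [← contractRight_rTensor, hx i, contractRight_rTensor]
  · have comp_eq (i : ι) : f i ∘ₗ j = g i ∘ₗ j := by
      ext m
      exact (Submodule.mem_iInf _).mp (hj.ge (LinearMap.mem_range_self j m)) i
    rintro _ ⟨y, rfl⟩
    simp only [Submodule.mem_iInf, LinearMap.mem_eqLocus]
    intro i
    rw [← LinearMap.rTensor_comp_apply, comp_eq, LinearMap.rTensor_comp_apply]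

theorem range_rTensor_algebraLinearMap (A : Type*) [Semiring A] [Algebra R A] :
    ((Algebra.linearMap R A).rTensor P).range = (TensorProduct.mk R A P 1).range := by
  have mk_one_eq : TensorProduct.mk R A P 1 =
      (Algebra.linearMap R A).rTensor P ∘ₗ (TensorProduct.lid R P).symm := by
    ext p
    simp
  rw [mk_one_eq, LinearMap.range_comp_of_range_eq_top _ (LinearEquiv.range _)]

end TensorContraction

theorem fixedPoints_baseChange_eq_range_general {k Ω V ι : Type*} [CommSemiring k] [Semiring Ω]
    [Algebra k Ω] [AddCommMonoid V] [Module k V] [Module.Projective k V] (φ : ι → Ω →ₐ[k] Ω)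
    (hk : ∀ a : Ω, (∀ i, φ i a = a) → a ∈ Set.range (algebraMap k Ω)) :
    {x : Ω ⊗[k] V | ∀ i, LinearMap.rTensor V (φ i).toLinearMap x = x} =
      Set.range (fun v : V => (1 : Ω) ⊗ₜ[k] v) := by
  have fixed_eq : ⨅ i, LinearMap.eqLocus (φ i).toLinearMap LinearMap.id =
      (Algebra.linearMap k Ω).range := by
    ext a
    simp only [Submodule.mem_iInf, LinearMap.mem_eqLocus]
    refine ⟨hk a, ?_⟩
    rintro ⟨c, rfl⟩ i
    exact (φ i).commutes c
  have fixed_rTensor_eq :=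
    (TensorContraction.iInf_eqLocus_rTensor_eq_range (P := V) fixed_eq).trans
      (TensorContraction.range_rTensor_algebraLinearMap Ω)
  ext x
  simpa [Submodule.mem_iInf] using SetLike.ext_iff.mp fixed_rTensor_eq x

/-- Let `Ω ⊇ k` be fields such that `k` is the fixed field of `Γ = Aut(Ω/k)`, and
let `V` be a `k`-vector space.  Letting `Γ` act on `Ω ⊗[k] V` through its action
on `Ω` (i.e. `σ(c ⊗ v) = σ(c) ⊗ v`), the set of elements fixed by every `σ ∈ Γ`
equals the image of `V` under `v ↦ 1 ⊗ v`. -/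
theorem fixedPoints_baseChange_eq_range
    (k Ω V : Type*) [Field k] [Field Ω] [Algebra k Ω]
    (hk : ∀ a : Ω, (∀ σ : Ω ≃ₐ[k] Ω, σ a = a) → a ∈ Set.range (algebraMap k Ω))
    [AddCommGroup V] [Module k V] :
    {x : Ω ⊗[k] V | ∀ σ : Ω ≃ₐ[k] Ω, LinearMap.rTensor V σ.toLinearMap x = x} =
      Set.range (fun v : V => (1 : Ω) ⊗ₜ[k] v) :=
  fixedPoints_baseChange_eq_range_general (fun σ : Ω ≃ₐ[k] Ω ↦ σ.toAlgHom) hk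
end

section
/- Let Ω ⊇ k be fields such that k is the fixed field of Γ = Aut(Ω/k), the group of field automorphisms of Ω fixing k pointwise. Let V be a k-vector space, and let Γ act on Ω ⊗ₖ V by σ(c ⊗ v) = σ(c) ⊗ v. Let W be an Ω-subspace of Ω ⊗ₖ V that is stable under the action of Γ. If W ≠ 0, then W contains a nonzero element fixed by every σ ∈ Γ. -/
open scoped TensorProduct

/-!
Among the nonzero vectors of `W`, take one of minimal support with respect to a basis coming from
`V`, and scale it so that some coordinate is `1`. A `k`-linear map `σ : Ω → Ω` with `σ 1 = 1` acts
coordinatewise, so it neither enlarges the support nor changes that coordinate. Hence the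
difference of the vector and its image has smaller support, and vanishes by minimality.
-/

section BaseChange

variable {R A A' M ι : Type*} [CommSemiring R] [Semiring A] [Algebra R A] [Semiring A']
  [Algebra R A'] [AddCommMonoid M] [Module R M]

theorem baseChange_repr_rTensor_apply (b : Module.Basis ι R M) (f : A →ₗ[R] A') (x : A ⊗[R] M)
    (i : ι) : (b.baseChange A').repr (f.rTensor M x) i = f ((b.baseChange A).repr x i) := by
  induction x using TensorProduct.induction_on with
  | zero => simp only [map_zero, Finsupp.zero_apply]
  | tmul a m => simp only [LinearMap.rTensor_tmul, Module.Basis.baseChange_repr_tmul, map_smul]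
  | add x y hx hy => simp only [map_add, Finsupp.add_apply, hx, hy]

theorem support_baseChange_repr_rTensor_subset (b : Module.Basis ι R M) (f : A →ₗ[R] A')
    (x : A ⊗[R] M) :
    ((b.baseChange A').repr (f.rTensor M x)).support ⊆ ((b.baseChange A).repr x).support := by
  intro i
  simp only [Finsupp.mem_support_iff, baseChange_repr_rTensor_apply]
  exact mt fun hi => by rw [hi, map_zero]

end BaseChange

section MinimalSupport

variable {K M ι : Type*} [DivisionRing K] [AddCommGroup M] [Module K M]
  (b : Module.Basis ι K M) {W : Submodule K M}

theorem exists_mem_repr_eq_one_minimal_support (hW : W ≠ ⊥) :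
    ∃ w ∈ W, ∃ i, b.repr w i = 1 ∧
      ∀ u ∈ W, (b.repr u).support ⊂ (b.repr w).support → u = 0 := by
  have hwf : WellFounded fun u v : M => (b.repr u).support ⊂ (b.repr v).support :=
    InvImage.wf (fun u => (b.repr u).support) wellFounded_lt
  obtain ⟨w, ⟨hw, hw_ne⟩, hmin⟩ :=
    hwf.has_min {u | u ∈ W ∧ u ≠ 0} (W.exists_mem_ne_zero_of_ne_bot hW)
  obtain ⟨i, hi⟩ := Finsupp.ne_iff.mp (b.repr.map_ne_zero_iff.mpr hw_ne)
  rw [Finsupp.zero_apply] at hi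
  refine ⟨(b.repr w i)⁻¹ • w, W.smul_mem _ hw, i, ?_, fun u hu hlt => ?_⟩
  · rw [map_smul, Finsupp.smul_apply, smul_eq_mul, inv_mul_cancel₀ hi]
  · rw [map_smul, Finsupp.support_smul_eq (inv_ne_zero hi)] at hlt
    exact by_contra fun hu_ne => hmin u ⟨hu, hu_ne⟩ hlt

theorem exists_mem_repr_eq_one_unique_of_support_subset (hW : W ≠ ⊥) :
    ∃ w ∈ W, ∃ i, b.repr w i = 1 ∧
      ∀ u ∈ W, (b.repr u).support ⊆ (b.repr w).support → b.repr u i = 1 → u = w := by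
  classical
  obtain ⟨w, hw, i, hwi, hmin⟩ := exists_mem_repr_eq_one_minimal_support b hW
  refine ⟨w, hw, i, hwi, fun u hu hsub hui => sub_eq_zero.mp (hmin _ (W.sub_mem hu hw) ?_)⟩
  have hsub' : (b.repr (u - w)).support ⊆ (b.repr w).support := by
    rw [map_sub]
    exact Finsupp.support_sub.trans (Finset.union_subset hsub subset_rfl)
  refine (Finset.ssubset_iff_of_subset hsub').mpr ⟨i, ?_, ?_⟩
  · simp only [Finsupp.mem_support_iff, hwi, ne_eq, one_ne_zero, not_false_eq_true]
  · rw [Finsupp.notMem_support_iff, map_sub, Finsupp.sub_apply, hui, hwi, sub_self]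

end MinimalSupport

theorem exists_nonzero_fixed_of_stable_submodule_general
    {k Ω V : Type*} [CommRing k] [DivisionRing Ω] [Algebra k Ω]
    [AddCommGroup V] [Module k V] [Module.Free k V]
    (S : Set (Ω →ₗ[k] Ω)) (hone : ∀ f ∈ S, f 1 = 1)
    (W : Submodule Ω (Ω ⊗[k] V)) (hstab : ∀ f ∈ S, ∀ w ∈ W, f.rTensor V w ∈ W) (hW : W ≠ ⊥) :
    ∃ w ∈ W, w ≠ 0 ∧ ∀ f ∈ S, f.rTensor V w = w := by
  let b := Module.Free.chooseBasis k V
  obtain ⟨w, hw, i, hwi, huniq⟩ :=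
    exists_mem_repr_eq_one_unique_of_support_subset (b.baseChange Ω) hW
  refine ⟨w, hw, ?_, fun f hf => huniq _ (hstab f hf w hw) ?_ ?_⟩
  · rintro rfl
    simp only [map_zero, Finsupp.zero_apply, zero_ne_one] at hwi
  · exact support_baseChange_repr_rTensor_subset b f w
  · rw [baseChange_repr_rTensor_apply, hwi, hone f hf]

/-- Let `Ω ⊇ k` be fields such that `k` is the fixed field of `Γ = Aut(Ω/k)`, let
`V` be a `k`-vector space, and let `Γ` act on `Ω ⊗[k] V` by `σ(c ⊗ v) = σ(c) ⊗ v`.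
If `W` is a nonzero `Ω`-subspace of `Ω ⊗[k] V` stable under the action of `Γ`,
then `W` contains a nonzero element fixed by every `σ ∈ Γ`. -/
theorem exists_nonzero_fixed_of_stable_submodule
    (k Ω V : Type*) [Field k] [Field Ω] [Algebra k Ω]
    (hk : ∀ a : Ω, (∀ σ : Ω ≃ₐ[k] Ω, σ a = a) → a ∈ Set.range (algebraMap k Ω))
    [AddCommGroup V] [Module k V]
    (W : Submodule Ω (Ω ⊗[k] V))
    (hstab : ∀ (σ : Ω ≃ₐ[k] Ω), ∀ w ∈ W, LinearMap.rTensor V σ.toLinearMap w ∈ W)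
    (hW : W ≠ ⊥) :
    ∃ w ∈ W, w ≠ 0 ∧ ∀ σ : Ω ≃ₐ[k] Ω, LinearMap.rTensor V σ.toLinearMap w = w := by
  simpa only [Set.forall_mem_range] using exists_nonzero_fixed_of_stable_submodule_general
    (Set.range fun σ : Ω ≃ₐ[k] Ω => σ.toLinearMap)
    (Set.forall_mem_range.mpr fun σ => map_one σ) W (Set.forall_mem_range.mpr hstab) hW
end

section
/- Let Ω ⊇ k be fields such that k is the fixed field of Γ = Aut(Ω/k), the group of field automorphisms of Ω fixing k pointwise. Let V be a k-vector space, and let Γ act on Ω ⊗ₖ V by σ(c ⊗ v) = σ(c) ⊗ v. An Ω-subspace W of Ω ⊗ₖ V is stable under the action of Γ if and only if W is the Ω-span of the set {1 ⊗ v | v ∈ V, 1 ⊗ v ∈ W}; equivalently, W = Ω · (1 ⊗ W₀) for the k-subspace W₀ = {v ∈ V | 1 ⊗ v ∈ W} of V. -/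
open scoped TensorProduct

/-!
Let `W₀ = {v | 1 ⊗ v ∈ W}`. A stable nonzero subspace contains a nonzero vector `1 ⊗ v`: take a
nonzero vector `y` whose support in a `k`-basis of `V` is minimal, scaled so that one coordinate
is `1`. Every `σ y - y` lies in the subspace and has strictly smaller support, so `y` is fixed and
its coordinates lie in `k`. Apply this to the image of `W` in `Ω ⊗ (V ⧸ W₀)`, which is again stable:
if `1 ⊗ u` lies in it and `v` lifts `u`, then `1 ⊗ v ∈ W`, because the kernel `Ω ⊗ W₀` is contained
in `W`; hence `v ∈ W₀` and `u = 0`. So the image vanishes, that is, `W = Ω ⊗ W₀`.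
-/

theorem exists_mem_minimal_support_repr_eq_one {K M ι : Type*} [DivisionRing K]
    [AddCommGroup M] [Module K M] (b : Module.Basis ι K M) {W : Submodule K M} (hW : W ≠ ⊥) :
    ∃ y ∈ W, ∃ i, b.repr y i = 1 ∧
      ∀ z ∈ W, (b.repr z).support ⊂ (b.repr y).support → z = 0 := by
  obtain ⟨w, ⟨hwW, hw0⟩, hmin⟩ := exists_minimalFor_of_wellFoundedLT
    (fun w => w ∈ W ∧ w ≠ 0) (fun w => (b.repr w).support) (W.ne_bot_iff.1 hW)
  obtain ⟨i, hi⟩ : ∃ i, b.repr w i ≠ 0 :=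
    Finsupp.ne_iff.1 (b.repr.map_ne_zero_iff.2 hw0)
  refine ⟨(b.repr w i)⁻¹ • w, W.smul_mem _ hwW, i, by simp [hi], fun z hzW hz => ?_⟩
  rw [map_smul, Finsupp.support_smul_eq (inv_ne_zero hi)] at hz
  by_contra hz0
  exact hz.not_ge (hmin ⟨hzW, hz0⟩ hz.le)

section Coordinates

variable {R A M ι : Type*} [CommSemiring R] [Semiring A] [Algebra R A]
  [AddCommMonoid M] [Module R M]

theorem basis_repr_rTensor_algHom {B : Type*} [Semiring B] [Algebra R B]
    (b : Module.Basis ι R M) (σ : A →ₐ[R] B) (x : A ⊗[R] M) (i : ι) :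
    (Algebra.TensorProduct.basis B b).repr (σ.toLinearMap.rTensor M x) i =
      σ ((Algebra.TensorProduct.basis A b).repr x i) := by
  induction x using TensorProduct.induction_on with
  | zero => simp
  | tmul a m => simp [Algebra.TensorProduct.basis_repr_tmul]
  | add x y hx hy => simp only [map_add, Finsupp.add_apply, hx, hy]

theorem exists_one_tmul_eq_of_repr_mem_range (b : Module.Basis ι R M) {x : A ⊗[R] M}
    (hx : ∀ i, (Algebra.TensorProduct.basis A b).repr x i ∈ Set.range (algebraMap R A)) :
    ∃ m : M, (1 : A) ⊗ₜ[R] m = x := by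
  choose c hc using hx
  let B := Algebra.TensorProduct.basis A b
  refine ⟨∑ i ∈ (B.repr x).support, c i • b i, ?_⟩
  calc (1 : A) ⊗ₜ[R] ∑ i ∈ (B.repr x).support, c i • b i
      = ∑ i ∈ (B.repr x).support, B.repr x i • B i := by
        simp only [B, TensorProduct.tmul_sum, TensorProduct.tmul_smul, ← hc, algebraMap_smul,
          Algebra.TensorProduct.basis_apply]
    _ = x := B.linearCombination_repr x

end Coordinates

theorem ker_baseChange_mkQ {R M : Type*} (A : Type*) [CommRing R] [Ring A] [Algebra R A]
    [AddCommGroup M] [Module R M] (p : Submodule R M) :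
    LinearMap.ker (p.mkQ.baseChange A) = p.baseChange A :=
  SetLike.ext fun x => SetLike.ext_iff.1 (lTensor_mkQ A p) x

section Descended

variable {R A M : Type*} [CommSemiring R] [Semiring A] [Algebra R A] [AddCommMonoid M] [Module R M]

variable (R) in
/-- The descent `{m | 1 ⊗ m ∈ W}` to `M` of an `A`-submodule `W` of `A ⊗[R] M`. -/
def descended (W : Submodule A (A ⊗[R] M)) : Submodule R M :=
  (W.restrictScalars R).comap (TensorProduct.mk R A M 1)

theorem mem_descended {W : Submodule A (A ⊗[R] M)} {m : M} :
    m ∈ descended R W ↔ (1 : A) ⊗ₜ[R] m ∈ W :=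
  Iff.rfl

theorem baseChange_descended_eq_span (W : Submodule A (A ⊗[R] M)) :
    (descended R W).baseChange A =
      Submodule.span A ((fun m : M => (1 : A) ⊗ₜ[R] m) '' {m : M | (1 : A) ⊗ₜ[R] m ∈ W}) :=
  Submodule.baseChange_eq_span A (descended R W)

theorem baseChange_descended_le (W : Submodule A (A ⊗[R] M)) :
    (descended R W).baseChange A ≤ W := by
  rw [baseChange_descended_eq_span, Submodule.span_le]
  exact Set.image_subset_iff.2 subset_rfl

end Descended

section Stable

variable {R A M N : Type*} [CommSemiring R] [Semiring A] [Algebra R A]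
  [AddCommMonoid M] [Module R M] [AddCommMonoid N] [Module R N]

/-- Stability of an `A`-submodule `W` of `A ⊗[R] M` under `a ⊗ m ↦ σ a ⊗ m` for all `σ ∈ Γ`.
Here `Γ` is any set of `R`-algebra endomorphisms of `A`, not necessarily a group. -/
def IsStableUnder (Γ : Set (A →ₐ[R] A)) (W : Submodule A (A ⊗[R] M)) : Prop :=
  ∀ σ ∈ Γ, ∀ w ∈ W, σ.toLinearMap.rTensor M w ∈ W

variable {Γ : Set (A →ₐ[R] A)}

theorem IsStableUnder.map_baseChange {W : Submodule A (A ⊗[R] M)} (hW : IsStableUnder Γ W)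
    (f : M →ₗ[R] N) : IsStableUnder Γ (W.map (f.baseChange A)) := by
  rintro σ hσ _ ⟨w, hw, rfl⟩
  refine ⟨σ.toLinearMap.rTensor M w, hW σ hσ w hw, ?_⟩
  simp only [LinearMap.baseChange_eq_ltensor, ← LinearMap.comp_apply,
    LinearMap.lTensor_comp_rTensor, LinearMap.rTensor_comp_lTensor]

theorem isStableUnder_baseChange (Γ : Set (A →ₐ[R] A)) (p : Submodule R M) :
    IsStableUnder Γ (p.baseChange A) := by
  have h_top : IsStableUnder Γ (⊤ : Submodule A (A ⊗[R] p)) := fun _ _ _ _ => Submodule.mem_top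
  rw [Submodule.baseChange, LinearMap.range_eq_map]
  exact h_top.map_baseChange p.subtype

end Stable

section Descent

variable {k Ω V : Type*} [DivisionRing Ω] [AddCommGroup V]

theorem IsStableUnder.exists_one_tmul_mem_ne_zero [CommRing k] [Algebra k Ω] [Module k V]
    [Module.Free k V] {Γ : Set (Ω →ₐ[k] Ω)}
    (hΓ : ∀ a : Ω, (∀ σ ∈ Γ, σ a = a) → a ∈ Set.range (algebraMap k Ω))
    {W : Submodule Ω (Ω ⊗[k] V)} (hW : IsStableUnder Γ W) (hW0 : W ≠ ⊥) :
    ∃ v : V, (1 : Ω) ⊗ₜ[k] v ∈ W ∧ (1 : Ω) ⊗ₜ[k] v ≠ 0 := by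
  let b := Module.Free.chooseBasis k V
  let B := Algebra.TensorProduct.basis Ω b
  obtain ⟨y, hyW, i, hyi, hmin⟩ := exists_mem_minimal_support_repr_eq_one B hW0
  have repr_sub (σ : Ω →ₐ[k] Ω) (j) :
      B.repr (σ.toLinearMap.rTensor V y - y) j = σ (B.repr y j) - B.repr y j := by
    rw [map_sub, Finsupp.sub_apply, basis_repr_rTensor_algHom]
  have support_ssubset (σ : Ω →ₐ[k] Ω) :
      (B.repr (σ.toLinearMap.rTensor V y - y)).support ⊂ (B.repr y).support := by
    have hi : B.repr (σ.toLinearMap.rTensor V y - y) i = 0 := by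
      rw [repr_sub, hyi, map_one, sub_self]
    refine (Finset.ssubset_iff_of_subset fun j => ?_).2
      ⟨i, by simp [hyi], Finsupp.notMem_support_iff.2 hi⟩
    simp only [Finsupp.mem_support_iff, repr_sub]
    exact mt fun hj => by rw [hj, map_zero, sub_zero]
  have coord_fixed (j) (σ) (hσ : σ ∈ Γ) : σ (B.repr y j) = B.repr y j := by
    have hy := hmin _ (W.sub_mem (hW σ hσ y hyW) hyW) (support_ssubset σ)
    rw [← sub_eq_zero, ← repr_sub, hy, map_zero, Finsupp.zero_apply]
  obtain ⟨v, rfl⟩ := exists_one_tmul_eq_of_repr_mem_range b fun j => hΓ _ (coord_fixed j)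
  exact ⟨v, hyW, fun hv => by simp [hv] at hyi⟩

variable [Field k] [Algebra k Ω] [Module k V] {Γ : Set (Ω →ₐ[k] Ω)}

theorem IsStableUnder.le_baseChange_descended
    (hΓ : ∀ a : Ω, (∀ σ ∈ Γ, σ a = a) → a ∈ Set.range (algebraMap k Ω))
    {W : Submodule Ω (Ω ⊗[k] V)} (hW : IsStableUnder Γ W) :
    W ≤ (descended k W).baseChange Ω := by
  let q := (descended k W).mkQ
  have ker_q : LinearMap.ker (q.baseChange Ω) = (descended k W).baseChange Ω :=
    ker_baseChange_mkQ Ω (descended k W)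
  rw [← ker_q, LinearMap.le_ker_iff_map]
  by_contra h_image
  obtain ⟨u, ⟨w, hwW, hwu⟩, hu0⟩ := (hW.map_baseChange q).exists_one_tmul_mem_ne_zero hΓ h_image
  obtain ⟨v, rfl⟩ := (descended k W).mkQ_surjective u
  have h_diff : w - (1 : Ω) ⊗ₜ[k] v ∈ W := by
    refine baseChange_descended_le W (ker_q ▸ ?_)
    rw [LinearMap.mem_ker, map_sub, hwu, LinearMap.baseChange_tmul, sub_self]
  have hv : v ∈ descended k W := mem_descended.2 ((W.sub_mem_iff_right hwW).1 h_diff)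
  exact hu0 (by rw [Submodule.mkQ_apply, (Submodule.Quotient.mk_eq_zero _).2 hv,
    TensorProduct.tmul_zero])

end Descent

theorem stable_submodule_iff_spanned_by_descended_general
    {k Ω V : Type*} [Field k] [DivisionRing Ω] [Algebra k Ω] {Γ : Set (Ω →ₐ[k] Ω)}
    (hΓ : ∀ a : Ω, (∀ σ ∈ Γ, σ a = a) → a ∈ Set.range (algebraMap k Ω))
    [AddCommGroup V] [Module k V] (W : Submodule Ω (Ω ⊗[k] V)) :
    IsStableUnder Γ W ↔
      W = Submodule.span Ω
        ((fun v : V => (1 : Ω) ⊗ₜ[k] v) '' {v : V | (1 : Ω) ⊗ₜ[k] v ∈ W}) := by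
  rw [← baseChange_descended_eq_span]
  constructor
  · exact fun hW => (hW.le_baseChange_descended hΓ).antisymm (baseChange_descended_le W)
  · exact fun hW => hW ▸ isStableUnder_baseChange Γ (descended k W)

/-- Let `Ω ⊇ k` be fields such that `k` is the fixed field of `Γ = Aut(Ω/k)`, let
`V` be a `k`-vector space, and let `Γ` act on `Ω ⊗[k] V` by `σ(c ⊗ v) = σ(c) ⊗ v`.
An `Ω`-subspace `W` of `Ω ⊗[k] V` is stable under the action of `Γ` if and only
if `W` is the `Ω`-span of the set `{1 ⊗ v | v ∈ V, 1 ⊗ v ∈ W}`. -/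
theorem stable_submodule_iff_spanned_by_descended
    (k Ω V : Type*) [Field k] [Field Ω] [Algebra k Ω]
    (hk : ∀ a : Ω, (∀ σ : Ω ≃ₐ[k] Ω, σ a = a) → a ∈ Set.range (algebraMap k Ω))
    [AddCommGroup V] [Module k V]
    (W : Submodule Ω (Ω ⊗[k] V)) :
    (∀ (σ : Ω ≃ₐ[k] Ω), ∀ w ∈ W, LinearMap.rTensor V σ.toLinearMap w ∈ W) ↔
      W = Submodule.span Ω
        ((fun v : V => (1 : Ω) ⊗ₜ[k] v) '' {v : V | (1 : Ω) ⊗ₜ[k] v ∈ W}) := by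
  exact Set.forall_mem_range.symm.trans <| stable_submodule_iff_spanned_by_descended_general
    (Γ := Set.range AlgEquiv.toAlgHom) (fun a ha => hk a (Set.forall_mem_range.1 ha)) W
end

section
/- Let Ω be a (possibly infinite) Galois field extension of k with Galois group Γ = Gal(Ω/k). Let V be an Ω-vector space equipped with a semilinear action of Γ, i.e., a group homomorphism ρ from Γ to the group of additive automorphisms of V such that ρ(σ)(c • v) = σ(c) • ρ(σ)(v) for all σ ∈ Γ, c ∈ Ω, v ∈ V. Assume the action is continuous: for every v ∈ V there is an intermediate field L with k ⊆ L ⊆ Ω and L finite-dimensional over k such that ρ(σ)(v) = v for every σ ∈ Γ fixing L pointwise. Let V^Γ = {v ∈ V | ρ(σ)(v) = v for all σ ∈ Γ}, a k-subspace of V. Then the map Ω ⊗ₖ V^Γ → V, c ⊗ v ↦ c • v, is bijective. -/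
open scoped TensorProduct

/-!
Injectivity: if a fixed vector is an `Ω`-combination of `Ω`-independent fixed vectors, its
coefficients are themselves fixed, hence lie in `k`; so `k`-independent fixed vectors stay
independent over `Ω`.

Surjectivity: suppose `v` is fixed by the subgroup `N` fixing `L` pointwise. For `a` in `L` the sum
`∑ σ ∈ Γ / N, σ a • σ v` of the conjugates of `a • v` is fixed by `Γ`. A linear form `φ` vanishing
on all fixed vectors gives `∑ σ, φ (σ v) * σ a = 0` for every `a`, and Dedekind's independence of
the characters `a ↦ σ a` forces `φ v = 0`.
-/

section ExpansionMap

variable {k Ω M : Type*} [Field k] [Field Ω] [Algebra k Ω]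
  [AddCommGroup M] [Module k M] [Module Ω M] [IsScalarTower k Ω M] {F : Submodule k M}

theorem coe_expansionMap_eq_liftBaseChange :
    ⇑(F.expansionMap k Ω M) = F.subtype.liftBaseChange Ω := by
  suffices F.expansionMap k Ω M = (F.subtype.liftBaseChange Ω).restrictScalars k from
    congrArg DFunLike.coe this
  ext c w
  simp [Submodule.expansionMap]

theorem injective_expansionMap_of_basis {ι : Type*} (b : Module.Basis ι k F)
    (hb : LinearIndependent Ω fun i ↦ (b i : M)) :
    Function.Injective (F.expansionMap k Ω M) := by
  rw [coe_expansionMap_eq_liftBaseChange]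
  have hcomp : F.subtype.liftBaseChange Ω =
      Finsupp.linearCombination Ω (fun i ↦ (b i : M)) ∘ₗ
        (Algebra.TensorProduct.basis Ω b).repr.toLinearMap :=
    (Algebra.TensorProduct.basis Ω b).ext fun i ↦ by simp
  rw [hcomp, LinearMap.coe_comp]
  exact Function.Injective.comp hb (LinearEquiv.injective _)

theorem surjective_expansionMap_of_span_eq_top (h : Submodule.span Ω (F : Set M) = ⊤) :
    Function.Surjective (F.expansionMap k Ω M) := by
  rw [coe_expansionMap_eq_liftBaseChange, ← LinearMap.range_eq_top, eq_top_iff, ← h,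
    Submodule.span_le]
  exact fun w hw ↦ ⟨1 ⊗ₜ ⟨w, hw⟩, by simp⟩

end ExpansionMap

section Independence

variable {k Ω V Γ ι : Type*} [Field k] [Field Ω] [Algebra k Ω]
  [AddCommGroup V] [Module k V] [Module Ω V] [IsScalarTower k Ω V]
  [Group Γ] [MulSemiringAction Γ Ω] [Algebra.IsInvariant k Ω Γ]
  [DistribMulAction Γ V] [SMulDistribClass Γ Ω V] {b : ι → V}

theorem mem_span_of_mem_fixedPoints (hb : LinearIndependent Ω b)
    (hfix : ∀ i, b i ∈ MulAction.fixedPoints Γ V) {v : V} (hv : v ∈ MulAction.fixedPoints Γ V)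
    (hspan : v ∈ Submodule.span Ω (Set.range b)) :
    v ∈ Submodule.span k (Set.range b) := by
  obtain ⟨c, rfl⟩ := Finsupp.mem_span_range_iff_exists_finsupp.1 hspan
  have coeff_fixed (σ : Γ) (i : ι) : σ • c i = c i := by
    have hσ : Finsupp.linearCombination Ω b (c.mapRange (σ • ·) (smul_zero σ)) =
        Finsupp.linearCombination Ω b c := by
      calc Finsupp.linearCombination Ω b (c.mapRange (σ • ·) (smul_zero σ))
          = c.sum fun i a ↦ (σ • a) • b i := by
            rw [Finsupp.linearCombination_apply, Finsupp.sum_mapRange_index (by simp)]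
        _ = σ • c.sum fun i a ↦ a • b i := by
            simp only [Finsupp.smul_sum, smul_distrib_smul, hfix _ σ]
        _ = Finsupp.linearCombination Ω b c := hv σ
    exact DFunLike.congr_fun (hb hσ) i
  refine Submodule.sum_mem _ fun i _ ↦ ?_
  obtain ⟨d, hd⟩ := Algebra.IsInvariant.isInvariant (A := k) (c i) (coeff_fixed · i)
  simp only [← hd, algebraMap_smul]
  exact Submodule.smul_mem _ _ (Submodule.subset_span ⟨i, rfl⟩)

theorem linearIndependent_of_mem_fixedPoints (hb : LinearIndependent k b)
    (hfix : ∀ i, b i ∈ MulAction.fixedPoints Γ V) : LinearIndependent Ω b := by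
  obtain ⟨s, -, -, hspan, hs⟩ :=
    exists_linearIndepOn_extension (linearIndepOn_empty Ω b) (Set.empty_subset Set.univ)
  have hs_univ (i : ι) : i ∈ s := by
    have hi : b i ∈ Submodule.span k (Set.range fun j : s ↦ b j) :=
      mem_span_of_mem_fixedPoints hs (fun j ↦ hfix j) (hfix i) <| by
        simpa only [Set.image_eq_range, SetLike.mem_coe] using hspan ⟨i, trivial, rfl⟩
    by_contra his
    exact hb.notMem_span_image his (by rwa [Set.image_eq_range])
  rwa [Set.eq_univ_of_forall hs_univ, linearIndepOn_univ_iff] at hs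

end Independence

section CosetRepresentatives

variable {Γ α : Type*} [Group Γ] [MulAction Γ α]

theorem out_mk_smul_eq {H : Subgroup Γ} {a : α} (h : H ≤ MulAction.stabilizer Γ a) (σ : Γ) :
    (σ : Γ ⧸ H).out • a = σ • a := by
  obtain ⟨τ, hτ⟩ := QuotientGroup.mk_out_eq_mul H σ
  rw [hτ, mul_smul, h τ.2]

theorem eq_of_forall_out_smul_eq {s : Set α} {p q : Γ ⧸ fixingSubgroup Γ s}
    (h : ∀ a ∈ s, p.out • a = q.out • a) : p = q := by
  rw [← p.out_eq', ← q.out_eq', QuotientGroup.eq, mem_fixingSubgroup_iff]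
  intro a ha
  rw [mul_smul, ← h a ha, inv_smul_smul]

end CosetRepresentatives

theorem linearIndependent_out_smul {Γ Ω : Type*} [CommRing Ω] [IsDomain Ω]
    [Group Γ] [MulSemiringAction Γ Ω] (M : Submonoid Ω) :
    LinearIndependent Ω
      fun (q : Γ ⧸ fixingSubgroup Γ (M : Set Ω)) (a : M) ↦ q.out • (a : Ω) := by
  let character (q : Γ ⧸ fixingSubgroup Γ (M : Set Ω)) : M →* Ω :=
    (MulDistribMulAction.toMonoidHom Ω q.out).comp M.subtype
  have character_injective : Function.Injective character := fun _ _ h ↦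
    eq_of_forall_out_smul_eq fun a ha ↦ DFunLike.congr_fun h ⟨a, ha⟩
  exact (linearIndependent_monoidHom M Ω).comp character character_injective

theorem finite_quotient_fixingSubgroup {Γ k Ω : Type*} [Field k] [CommRing Ω] [IsDomain Ω]
    [Algebra k Ω] [Group Γ] [MulSemiringAction Γ Ω] [SMulCommClass Γ k Ω]
    (A : Subalgebra k Ω) [FiniteDimensional k A] :
    Finite (Γ ⧸ fixingSubgroup Γ (A : Set Ω)) :=
  .of_injective
    (fun q ↦ (MulSemiringAction.toAlgHom k Ω q.out).comp A.val)
    fun _ _ h ↦ eq_of_forall_out_smul_eq fun a ha ↦ DFunLike.congr_fun h ⟨a, ha⟩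

section RelTrace

variable {Γ V : Type*} [Group Γ]

/-- The relative trace `∑ σ ∈ Γ / H, σ • v` from `H`-fixed to `Γ`-fixed vectors. It is encoded with
chosen coset representatives, a choice that is immaterial when `H` fixes `v`. -/
noncomputable def relTrace [AddCommMonoid V] [DistribMulAction Γ V]
    (H : Subgroup Γ) [Fintype (Γ ⧸ H)] (v : V) : V :=
  ∑ q : Γ ⧸ H, q.out • v

theorem relTrace_mem_fixedPoints [AddCommMonoid V] [DistribMulAction Γ V]
    {H : Subgroup Γ} [Fintype (Γ ⧸ H)] {v : V} (h : H ≤ MulAction.stabilizer Γ v) :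
    relTrace H v ∈ MulAction.fixedPoints Γ V := by
  intro σ
  rw [relTrace, Finset.smul_sum]
  refine Fintype.sum_equiv (MulAction.toPerm σ) _ _ fun q ↦ ?_
  calc σ • q.out • v
      = (σ * q.out) • v := (mul_smul σ q.out v).symm
    _ = (σ • (q.out : Γ ⧸ H)).out • v := (out_mk_smul_eq h _).symm
    _ = (σ • q).out • v := by rw [QuotientGroup.out_eq']

variable {Ω : Type*} [Field Ω] [AddCommGroup V] [Module Ω V]
  [MulSemiringAction Γ Ω] [DistribMulAction Γ V] [SMulDistribClass Γ Ω V]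

theorem mem_span_range_relTrace_smul (M : Submonoid Ω)
    [Fintype (Γ ⧸ fixingSubgroup Γ (M : Set Ω))] {v : V}
    (hv : fixingSubgroup Γ (M : Set Ω) ≤ MulAction.stabilizer Γ v) :
    v ∈ Submodule.span Ω
      (Set.range fun a : M ↦ relTrace (fixingSubgroup Γ (M : Set Ω)) ((a : Ω) • v)) := by
  by_contra hmem
  obtain ⟨φ, hφv, hφ⟩ := Submodule.exists_le_ker_of_notMem hmem
  have relation : ∑ q : Γ ⧸ fixingSubgroup Γ (M : Set Ω),
      φ (q.out • v) • (fun a : M ↦ q.out • (a : Ω)) = 0 := by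
    ext a
    have ha : φ (relTrace _ ((a : Ω) • v)) = 0 := hφ (Submodule.subset_span ⟨a, rfl⟩)
    simpa [relTrace, smul_distrib_smul, mul_comm] using ha
  have hφ_conj := Fintype.linearIndependent_iff.1 (linearIndependent_out_smul M) _ relation
  have hφ_one := hφ_conj ((1 : Γ) : Γ ⧸ fixingSubgroup Γ (M : Set Ω))
  rw [out_mk_smul_eq hv, one_smul] at hφ_one
  exact hφv hφ_one

theorem mem_span_fixedPoints (M : Submonoid Ω) [Finite (Γ ⧸ fixingSubgroup Γ (M : Set Ω))] {v : V}
    (hv : fixingSubgroup Γ (M : Set Ω) ≤ MulAction.stabilizer Γ v) :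
    v ∈ Submodule.span Ω (MulAction.fixedPoints Γ V) := by
  have := Fintype.ofFinite (Γ ⧸ fixingSubgroup Γ (M : Set Ω))
  refine Submodule.span_mono ?_ (mem_span_range_relTrace_smul M hv)
  rintro _ ⟨a, rfl⟩
  refine relTrace_mem_fixedPoints fun σ hσ ↦ ?_
  rw [MulAction.mem_stabilizer_iff, smul_distrib_smul, hσ a, hv hσ]

end RelTrace

theorem bijective_expansionMap_fixedPoints_of_semilinear_general
    {k Ω V Γ : Type*} [Field k] [Field Ω] [Algebra k Ω]
    [AddCommGroup V] [Module k V] [Module Ω V] [IsScalarTower k Ω V]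
    [Group Γ] [MulSemiringAction Γ Ω] [SMulCommClass Γ k Ω] [Algebra.IsInvariant k Ω Γ]
    [DistribMulAction Γ V] [SMulDistribClass Γ Ω V]
    (hcont : ∀ v : V, ∃ L : IntermediateField k Ω, FiniteDimensional k L ∧
      fixingSubgroup Γ (L : Set Ω) ≤ MulAction.stabilizer Γ v)
    (F : Submodule k V) (hF : ∀ v : V, v ∈ F ↔ v ∈ MulAction.fixedPoints Γ V) :
    Function.Bijective (Submodule.expansionMap k Ω V F) := by
  constructor
  · let b := Module.Basis.ofVectorSpace k F
    exact injective_expansionMap_of_basis b <| linearIndependent_of_mem_fixedPoints (Γ := Γ)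
      (b.linearIndependent.map' F.subtype F.ker_subtype) fun i ↦ (hF _).1 (b i).2
  · refine surjective_expansionMap_of_span_eq_top <| eq_top_iff.2 fun v _ ↦ ?_
    obtain ⟨L, hL, hv⟩ := hcont v
    have : Finite (Γ ⧸ fixingSubgroup Γ (L : Set Ω)) :=
      have : FiniteDimensional k L.toSubalgebra := hL
      finite_quotient_fixingSubgroup L.toSubalgebra
    rw [show (F : Set V) = MulAction.fixedPoints Γ V from Set.ext hF]
    exact mem_span_fixedPoints L.toSubalgebra.toSubmonoid hv

/-- The action by additive automorphisms given by a homomorphism to `AddAut V`; inverse to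
`DistribMulAction.toAddAut`. It presents a representation as a typeclass action. -/
abbrev distribMulActionOfAddAut {Γ V : Type*} [Group Γ] [AddCommGroup V]
    (ρ : Γ →* Multiplicative (AddAut V)) : DistribMulAction Γ V where
  smul σ v := ρ σ v
  one_smul v := by change ρ 1 v = v; rw [map_one]; rfl
  mul_smul σ τ v := by change ρ (σ * τ) v = ρ σ (ρ τ v); rw [map_mul]; rfl
  smul_zero σ := map_zero (ρ σ).toAdd
  smul_add σ := map_add (ρ σ).toAdd

/-- Let `Ω` be a (possibly infinite) Galois extension of `k` with Galois group
`Γ`, and let `V` be an `Ω`-vector space with a continuous semilinear action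
`ρ` of `Γ`.  Then the canonical map `Ω ⊗[k] V^Γ → V`, `c ⊗ v ↦ c • v`, is
bijective, where `V^Γ` is the `k`-subspace of vectors fixed by all `ρ(σ)`. -/
theorem bijective_expansionMap_fixedPoints_of_semilinear
    (k Ω V : Type*) [Field k] [Field Ω] [Algebra k Ω] [IsGalois k Ω]
    [AddCommGroup V] [Module k V] [Module Ω V] [IsScalarTower k Ω V]
    (ρ : (Ω ≃ₐ[k] Ω) →* Multiplicative (AddAut V))
    (hsemi : ∀ (σ : Ω ≃ₐ[k] Ω) (c : Ω) (v : V), ρ σ (c • v) = σ c • (ρ σ v))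
    (hcont : ∀ v : V, ∃ L : IntermediateField k Ω, FiniteDimensional k L ∧
      ∀ σ : Ω ≃ₐ[k] Ω, (∀ x ∈ L, σ x = x) → ρ σ v = v)
    (F : Submodule k V) (hF : ∀ v : V, v ∈ F ↔ ∀ σ : Ω ≃ₐ[k] Ω, ρ σ v = v) :
    Function.Bijective (Submodule.expansionMap k Ω V F) := by
  let := distribMulActionOfAddAut ρ
  have : SMulDistribClass (Ω ≃ₐ[k] Ω) Ω V := ⟨hsemi⟩
  refine bijective_expansionMap_fixedPoints_of_semilinear_general (Γ := Ω ≃ₐ[k] Ω)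
    (fun v ↦ ?_) F hF
  obtain ⟨L, hL, hv⟩ := hcont v
  exact ⟨L, hL, fun σ hσ ↦ hv σ fun x hx ↦ hσ ⟨x, hx⟩⟩
end

section
/- Let V be a scheme that is separated and of finite type over a field k, and let Ω be a field extension of k. Let W₁ and W₂ be closed subschemes of V (given by closed immersions ι₁ : W₁ → V and ι₂ : W₂ → V over k). If the base changes of W₁ and W₂ to Ω define the same closed subscheme of V ×_{Spec k} Spec Ω (i.e., there is an isomorphism W₁ ×_{Spec k} Spec Ω ≅ W₂ ×_{Spec k} Spec Ω commuting with the base-changed closed immersions into V ×_{Spec k} Spec Ω), then W₁ and W₂ are the same closed subscheme of V (there is an isomorphism W₁ ≅ W₂ commuting with ι₁ and ι₂). -/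
open AlgebraicGeometry CategoryTheory CategoryTheory.Limits

/-!
A closed subscheme is in particular a monomorphism into `V`, and `Spec Ω ⟶ Spec k` is faithfully
flat and quasi-compact, hence so is each projection `W ×ₖ Ω ⟶ W`. Such a projection is an effective,
in particular a strong, epimorphism of schemes. Therefore the morphism
`W₁ ×ₖ Ω ⟶ W₂ ×ₖ Ω ⟶ W₂` over `V` descends to `W₁ ⟶ W₂`, by lifting against `W₂ ⟶ V`; by symmetry
the two subobjects of `V` contain each other.
-/

theorem subobjectMk_le_mk_of_strongEpi {C : Type*} [Category* C] {V W₁ W₂ Z : C}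
    {ι₁ : W₁ ⟶ V} {ι₂ : W₂ ⟶ V} [Mono ι₁] [Mono ι₂] (p : Z ⟶ W₁) [StrongEpi p] (q : Z ⟶ W₂)
    (h : q ≫ ι₂ = p ≫ ι₁) : Subobject.mk ι₁ ≤ Subobject.mk ι₂ :=
  have sq : CommSq q p ι₂ ι₁ := ⟨h⟩
  Subobject.mk_le_mk_of_comm sq.lift sq.fac_right

section BaseChange

variable {C : Type*} [Category* C] {S T V W₁ W₂ : C} (f : V ⟶ S) (g : T ⟶ S)
  (ι₁ : W₁ ⟶ V) (ι₂ : W₂ ⟶ V) [Mono ι₁] [Mono ι₂]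
  [HasPullback f g] [HasPullback (ι₁ ≫ f) g] [HasPullback (ι₂ ≫ f) g]

theorem subobjectMk_le_mk_of_baseChange [StrongEpi (pullback.fst (ι₁ ≫ f) g)]
    (φ : pullback (ι₁ ≫ f) g ⟶ pullback (ι₂ ≫ f) g)
    (hφ : φ ≫ pullback.map (ι₂ ≫ f) g f g ι₂ (𝟙 _) (𝟙 _) (by simp) (by simp) =
      pullback.map (ι₁ ≫ f) g f g ι₁ (𝟙 _) (𝟙 _) (by simp) (by simp)) :
    Subobject.mk ι₁ ≤ Subobject.mk ι₂ :=
  subobjectMk_le_mk_of_strongEpi (pullback.fst (ι₁ ≫ f) g) (φ ≫ pullback.fst (ι₂ ≫ f) g) <| by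
    simpa only [Category.assoc, pullback.map, pullback.lift_fst] using congr($hφ ≫ pullback.fst f g)

theorem subobjectMk_eq_mk_of_baseChange_iso
    [StrongEpi (pullback.fst (ι₁ ≫ f) g)] [StrongEpi (pullback.fst (ι₂ ≫ f) g)]
    (e : pullback (ι₁ ≫ f) g ≅ pullback (ι₂ ≫ f) g)
    (he : e.hom ≫ pullback.map (ι₂ ≫ f) g f g ι₂ (𝟙 _) (𝟙 _) (by simp) (by simp) =
      pullback.map (ι₁ ≫ f) g f g ι₁ (𝟙 _) (𝟙 _) (by simp) (by simp)) :
    Subobject.mk ι₁ = Subobject.mk ι₂ :=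
  le_antisymm (subobjectMk_le_mk_of_baseChange f g ι₁ ι₂ e.hom he)
    (subobjectMk_le_mk_of_baseChange f g ι₂ ι₁ e.inv ((e.inv_comp_eq).2 he.symm))

end BaseChange

theorem closedSubscheme_eq_of_baseChange_eq_general {S T V W₁ W₂ : Scheme.{u}}
    (f : V ⟶ S) (g : T ⟶ S) [Flat g] [Surjective g] [QuasiCompact g]
    (ι₁ : W₁ ⟶ V) (ι₂ : W₂ ⟶ V) [Mono ι₁] [Mono ι₂]
    (e : pullback (ι₁ ≫ f) g ≅ pullback (ι₂ ≫ f) g)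
    (he : e.hom ≫ pullback.map (ι₂ ≫ f) g f g ι₂ (𝟙 _) (𝟙 _) (by simp) (by simp) =
      pullback.map (ι₁ ≫ f) g f g ι₁ (𝟙 _) (𝟙 _) (by simp) (by simp)) :
    ∃ e₀ : W₁ ≅ W₂, e₀.hom ≫ ι₂ = ι₁ := by
  have strongEpi_fst {W : Scheme.{u}} (w : W ⟶ S) : StrongEpi (pullback.fst w g) :=
    have : EffectiveEpi (pullback.fst w g) := inferInstance
    inferInstance
  have := strongEpi_fst (ι₁ ≫ f)
  have := strongEpi_fst (ι₂ ≫ f)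
  have h : Subobject.mk ι₁ = Subobject.mk ι₂ := subobjectMk_eq_mk_of_baseChange_iso f g ι₁ ι₂ e he
  exact ⟨Subobject.isoOfMkEqMk ι₁ ι₂ h, Subobject.ofMkLEMk_comp h.le⟩

theorem flat_and_surjective_specMap_algebraMap (A B : Type u) [CommRing A] [CommRing B]
    [Algebra A B] [Module.FaithfullyFlat A B] :
    Flat (Spec.map (CommRingCat.ofHom (algebraMap A B))) ∧
      Surjective (Spec.map (CommRingCat.ofHom (algebraMap A B))) :=
  (flat_and_surjective_SpecMap_iff _).2 (RingHom.faithfullyFlat_algebraMap_iff.2 inferInstance)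

/-- Let `V` be an algebraic scheme (separated and of finite type) over a field
`k` and let `Ω` be a field extension of `k`.  If two closed subschemes
`ι₁ : W₁ ⟶ V`, `ι₂ : W₂ ⟶ V` of `V` become the same closed subscheme of
`V ×_{Spec k} Spec Ω` after base change to `Ω`, then they are the same closed
subscheme of `V`. -/
theorem closedSubscheme_eq_of_baseChange_eq
    {k Ω : Type u} [Field k] [Field Ω] [Algebra k Ω]
    (V W₁ W₂ : Scheme.{u}) (f : V ⟶ Spec (CommRingCat.of k))
    [IsSeparated f] [LocallyOfFiniteType f] [QuasiCompact f]
    (ι₁ : W₁ ⟶ V) (ι₂ : W₂ ⟶ V) [IsClosedImmersion ι₁] [IsClosedImmersion ι₂]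
    (e : pullback (ι₁ ≫ f) (Spec.map (CommRingCat.ofHom (algebraMap k Ω))) ≅
         pullback (ι₂ ≫ f) (Spec.map (CommRingCat.ofHom (algebraMap k Ω))))
    (he : e.hom ≫
        pullback.map (ι₂ ≫ f) (Spec.map (CommRingCat.ofHom (algebraMap k Ω)))
          f (Spec.map (CommRingCat.ofHom (algebraMap k Ω)))
          ι₂ (𝟙 _) (𝟙 _) (by simp) (by simp) =
      pullback.map (ι₁ ≫ f) (Spec.map (CommRingCat.ofHom (algebraMap k Ω)))
          f (Spec.map (CommRingCat.ofHom (algebraMap k Ω)))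
          ι₁ (𝟙 _) (𝟙 _) (by simp) (by simp)) :
    ∃ e₀ : W₁ ≅ W₂, e₀.hom ≫ ι₂ = ι₁ := by
  obtain ⟨_, _⟩ := flat_and_surjective_specMap_algebraMap k Ω
  exact closedSubscheme_eq_of_baseChange_eq_general f _ ι₁ ι₂ e he
end

section
/- Let k be an algebraically closed field, and let V and W be schemes that are separated and of finite type over k. Let K be a field extension of k. If V ×_{Spec k} Spec K and W ×_{Spec k} Spec K are isomorphic as K-schemes, then V and W are isomorphic as k-schemes. -/
open AlgebraicGeometry CategoryTheory CategoryTheory.Limits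

/-!
`Spec K` is the cofiltered limit of the affine schemes `Spec A`, where `A` runs over the finitely
generated `k`-subalgebras of `K`. An isomorphism `V_K ≅ W_K` and its inverse are described by
finitely many equations, so they come from a family of isomorphisms `V ≅ W` parametrised by `Spec A`
for some such `A`. By the Nullstellensatz `Spec A` has a `k`-rational point, and the member of the
family at this point is an isomorphism of `k`-schemes.
-/

universe v u

open MonoidalCategory CartesianMonoidalCategory Opposite

section Cofiltered

variable {I C : Type*} [Category* I] [Category* C] {D : I ⥤ C} {c : Cone D}
  {Y : C} [PreservesColimit D.op (yoneda.obj Y)]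

lemma exists_π_app_comp_eq_of_isLimit (hc : IsLimit c) (a : c.pt ⟶ Y) :
    ∃ (i : I) (b : D.obj i ⟶ Y), c.π.app i ≫ b = a :=
  have ⟨i, b, hb⟩ := Types.jointly_surjective _ (isColimitOfPreserves (yoneda.obj Y) hc.op) a
  ⟨i.unop, b, hb⟩

lemma exists_map_comp_eq_of_isLimit [IsCofiltered I] (hc : IsLimit c) {i : I} {a b : D.obj i ⟶ Y}
    (hab : c.π.app i ≫ a = c.π.app i ≫ b) :
    ∃ (j : I) (m : j ⟶ i), D.map m ≫ a = D.map m ≫ b :=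
  have ⟨j, m, h⟩ := (Types.FilteredColimit.isColimit_eq_iff'
    (isColimitOfPreserves (yoneda.obj Y) hc.op) a b).mp hab
  ⟨j.unop, m.unop, h⟩

end Cofiltered

section Families

variable {C : Type*} [Category* C] [CartesianMonoidalCategory C] {T T' X Y Z : C}

/-- A morphism `X ⊗ T ⟶ Y` is thought of as a family of morphisms `X ⟶ Y` parametrised by `T`.
This is the memberwise composition of two such families. -/
def compFamily (a : X ⊗ T ⟶ Y) (b : Y ⊗ T ⟶ Z) : X ⊗ T ⟶ Z :=
  lift a (snd X T) ≫ b

lemma whiskerLeft_comp_compFamily (s : T' ⟶ T) (a : X ⊗ T ⟶ Y) (b : Y ⊗ T ⟶ Z) :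
    X ◁ s ≫ compFamily a b = compFamily (X ◁ s ≫ a) (Y ◁ s ≫ b) := by
  have h : X ◁ s ≫ lift a (snd X T) = lift (X ◁ s ≫ a) (snd X T') ≫ Y ◁ s := by
    ext <;> simp
  simp only [compFamily, reassoc_of% h]

lemma rightUnitor_inv_comp_compFamily (a : X ⊗ 𝟙_ C ⟶ Y) (b : Y ⊗ 𝟙_ C ⟶ Z) :
    (ρ_ X).inv ≫ compFamily a b = ((ρ_ X).inv ≫ a) ≫ (ρ_ Y).inv ≫ b := by
  have h : (ρ_ X).inv ≫ lift a (snd X (𝟙_ C)) = ((ρ_ X).inv ≫ a) ≫ (ρ_ Y).inv := by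
    ext; simp
  simp only [compFamily, reassoc_of% h, Category.assoc]

lemma compFamily_comp_fst (u : X ⊗ T ⟶ Y ⊗ T) (hu : u ≫ snd Y T = snd X T)
    (b : Y ⊗ T ⟶ Z) : compFamily (u ≫ fst Y T) b = u ≫ b := by
  rw [compFamily, ← hu, lift_comp_fst_snd]

variable (T X Y) in
/-- A family of isomorphisms `X ≅ Y` parametrised by `T`. The constant family of identities of `X`
is the projection `fst X T`. -/
structure IsoFamily where
  hom : X ⊗ T ⟶ Y
  inv : Y ⊗ T ⟶ X
  hom_inv : compFamily hom inv = fst X T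
  inv_hom : compFamily inv hom = fst Y T

namespace IsoFamily

/-- Pullback of a family of isomorphisms along a morphism of parameter objects. -/
def restrict (φ : IsoFamily T X Y) (s : T' ⟶ T) : IsoFamily T' X Y where
  hom := X ◁ s ≫ φ.hom
  inv := Y ◁ s ≫ φ.inv
  hom_inv := by rw [← whiskerLeft_comp_compFamily, φ.hom_inv, whiskerLeft_fst]
  inv_hom := by rw [← whiskerLeft_comp_compFamily, φ.inv_hom, whiskerLeft_fst]

/-- The isomorphism given by a family over a point. -/
def toIso (φ : IsoFamily (𝟙_ C) X Y) : X ≅ Y where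
  hom := (ρ_ X).inv ≫ φ.hom
  inv := (ρ_ Y).inv ≫ φ.inv
  hom_inv_id := by rw [← rightUnitor_inv_comp_compFamily, φ.hom_inv, rightUnitor_inv_fst]
  inv_hom_id := by rw [← rightUnitor_inv_comp_compFamily, φ.inv_hom, rightUnitor_inv_fst]

/-- The family of isomorphisms given by an isomorphism `X ⊗ T ≅ Y ⊗ T` over `T`. -/
def ofIso (e : X ⊗ T ≅ Y ⊗ T) (he : e.hom ≫ snd Y T = snd X T) : IsoFamily T X Y where
  hom := e.hom ≫ fst Y T
  inv := e.inv ≫ fst X T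
  hom_inv := by rw [compFamily_comp_fst _ he, e.hom_inv_id_assoc]
  inv_hom := by
    rw [compFamily_comp_fst _ (by rw [← he, e.inv_hom_id_assoc]), e.inv_hom_id_assoc]

end IsoFamily

end Families

section Descent

variable {C : Type u} [Category.{v} C] [CartesianMonoidalCategory C] {X Y : C}

instance preservesLimitsOfShape_tensorLeft {J : Type v} [SmallCategory J] [IsConnected J] (X : C) :
    PreservesLimitsOfShape J (tensorLeft X) :=
  have := prod_preservesConnectedLimits (J := J) X
  preservesLimitsOfShape_of_natIso (tensorLeftIsoProd X).symm

attribute [local instance] IsCofiltered.isConnected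

variable {I : Type v} [SmallCategory I] [IsCofiltered I] {D : I ⥤ C} {c : Cone D}

lemma exists_map_compFamily_eq_fst [PreservesColimit (D ⋙ tensorLeft X).op (yoneda.obj X)]
    (hc : IsLimit c) {i : I} (a : X ⊗ D.obj i ⟶ Y) (b : Y ⊗ D.obj i ⟶ X)
    (h : compFamily (X ◁ c.π.app i ≫ a) (Y ◁ c.π.app i ≫ b) = fst X c.pt) :
    ∃ (j : I) (m : j ⟶ i), compFamily (X ◁ D.map m ≫ a) (Y ◁ D.map m ≫ b) = fst X (D.obj j) := by
  obtain ⟨j, m, hm⟩ := exists_map_comp_eq_of_isLimit (isLimitOfPreserves (tensorLeft X) hc)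
    (a := compFamily a b) (b := fst X (D.obj i))
    ((whiskerLeft_comp_compFamily ..).trans (h.trans (whiskerLeft_fst ..).symm))
  exact ⟨j, m, (whiskerLeft_comp_compFamily ..).symm.trans (hm.trans (whiskerLeft_fst ..))⟩

theorem IsoFamily.exists_of_isLimit
    [PreservesColimit (D ⋙ tensorLeft X).op (yoneda.obj X)]
    [PreservesColimit (D ⋙ tensorLeft X).op (yoneda.obj Y)]
    [PreservesColimit (D ⋙ tensorLeft Y).op (yoneda.obj X)]
    [PreservesColimit (D ⋙ tensorLeft Y).op (yoneda.obj Y)]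
    (hc : IsLimit c) (φ : IsoFamily c.pt X Y) : ∃ i, Nonempty (IsoFamily (D.obj i) X Y) := by
  obtain ⟨i₁, a₁, ha₁⟩ :=
    exists_π_app_comp_eq_of_isLimit (isLimitOfPreserves (tensorLeft X) hc) φ.hom
  obtain ⟨i₂, b₂, hb₂⟩ :=
    exists_π_app_comp_eq_of_isLimit (isLimitOfPreserves (tensorLeft Y) hc) φ.inv
  obtain ⟨i, n₁, n₂, -⟩ := IsCofilteredOrEmpty.cone_objs i₁ i₂
  have restrict_hom {j : I} (m : j ⟶ i₁) : X ◁ c.π.app j ≫ X ◁ D.map m ≫ a₁ = φ.hom := by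
    rw [← ha₁, ← whiskerLeft_comp_assoc, c.w]; rfl
  have restrict_inv {j : I} (m : j ⟶ i₂) : Y ◁ c.π.app j ≫ Y ◁ D.map m ≫ b₂ = φ.inv := by
    rw [← hb₂, ← whiskerLeft_comp_assoc, c.w]; rfl
  obtain ⟨j, m, h_left⟩ := exists_map_compFamily_eq_fst hc (X ◁ D.map n₁ ≫ a₁) (Y ◁ D.map n₂ ≫ b₂)
    (by rw [restrict_hom, restrict_inv, φ.hom_inv])
  obtain ⟨l, q, h_right⟩ := exists_map_compFamily_eq_fst hc
    (Y ◁ D.map (m ≫ n₂) ≫ b₂) (X ◁ D.map (m ≫ n₁) ≫ a₁)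
    (by rw [restrict_hom, restrict_inv, φ.inv_hom])
  refine ⟨l, ⟨⟨X ◁ D.map (q ≫ m ≫ n₁) ≫ a₁, Y ◁ D.map (q ≫ m ≫ n₂) ≫ b₂, ?_, ?_⟩⟩⟩
  · simpa [whiskerLeft_comp_compFamily] using congr(X ◁ D.map q ≫ $h_left)
  · simpa using h_right

end Descent

section Scheme

variable {S : Scheme.{u}}

attribute [local instance] Over.cartesianMonoidalCategory

lemma isAffineHom_whiskerLeft_left {T T' : Over S} (X : Over S) (s : T' ⟶ T)
    [IsAffineHom s.left] : IsAffineHom (X ◁ s).left :=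
  have : MorphismProperty.IsStableUnderComposition @IsAffineHom.{u} :=
    (inferInstance : MorphismProperty.IsMultiplicative @IsAffineHom).toIsStableUnderComposition
  MorphismProperty.pullbackMap (P := @IsAffineHom) (f := X.hom) (f' := X.hom) (i₁ := 𝟙 _)
    (i₂ := s.left) inferInstance inferInstance (by simp) (by simp)

variable {I : Type u} [SmallCategory I] [IsCofiltered I] {D : I ⥤ Over S}
  [∀ {i j : I} (m : i ⟶ j), IsAffineHom (D.map m).left]
  [∀ i, CompactSpace (D.obj i).left] [∀ i, QuasiSeparatedSpace (D.obj i).left]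

instance preservesColimit_tensorLeft_yoneda (X Y : Over S)
    [QuasiCompact X.hom] [QuasiSeparated X.hom] [LocallyOfFinitePresentation Y.hom] :
    PreservesColimit (D ⋙ tensorLeft X).op (yoneda.obj Y) := by
  have (i : I) : CompactSpace ((D ⋙ tensorLeft X).obj i).left :=
    QuasiCompact.compactSpace_of_compactSpace (pullback.snd X.hom (D.obj i).hom)
  have (i : I) : QuasiSeparatedSpace ((D ⋙ tensorLeft X).obj i).left :=
    quasiSeparatedSpace_of_quasiSeparated (pullback.snd X.hom (D.obj i).hom)
  have {i j : I} (m : i ⟶ j) : IsAffineHom ((D ⋙ tensorLeft X).map m).left :=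
    isAffineHom_whiskerLeft_left X (D.map m)
  infer_instance

theorem nonempty_iso_of_tensor_iso_of_isLimit {c : Cone D} (hc : IsLimit c)
    (hD : ∀ i, Nonempty (𝟙_ (Over S) ⟶ D.obj i)) {X Y : Over S}
    [QuasiCompact X.hom] [QuasiSeparated X.hom] [LocallyOfFinitePresentation X.hom]
    [QuasiCompact Y.hom] [QuasiSeparated Y.hom] [LocallyOfFinitePresentation Y.hom]
    (e : X ⊗ c.pt ≅ Y ⊗ c.pt) (he : e.hom ≫ snd Y c.pt = snd X c.pt) : Nonempty (X ≅ Y) := by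
  obtain ⟨i, ⟨φ⟩⟩ := IsoFamily.exists_of_isLimit hc (.ofIso e he)
  obtain ⟨s⟩ := hD i
  exact ⟨(φ.restrict s).toIso⟩

end Scheme

section Algebra

variable (k K : Type*) [CommSemiring k] [Semiring K] [Algebra k K]

/-- The finitely generated subalgebras of `K`, ordered by inclusion. -/
abbrev FGSubalgebra := {A : Subalgebra k K // A.FG}

namespace FGSubalgebra

instance : IsDirectedOrder (FGSubalgebra k K) where
  directed A B := ⟨⟨A ⊔ B, A.2.sup B.2⟩, le_sup_left (a := A.1), le_sup_right (a := A.1)⟩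

instance : Nonempty (FGSubalgebra k K) := ⟨⟨⊥, Subalgebra.fg_bot⟩⟩

lemma exists_mem (x : K) : ∃ A : FGSubalgebra k K, x ∈ A.1 :=
  ⟨⟨_, Subalgebra.fg_adjoin_finset {x}⟩, Algebra.subset_adjoin (by simp)⟩

lemma iSup_eq_top : ⨆ A : FGSubalgebra k K, A.1 = ⊤ :=
  top_unique fun x _ ↦ have ⟨A, hx⟩ := exists_mem k K x
    le_iSup (fun A : FGSubalgebra k K ↦ A.1) A hx

section Lift

variable {k K} {B : Type*} [Semiring B] [Algebra k B]

/-- The homomorphism out of `K` glued from compatible homomorphisms out of its finitely generated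
subalgebras. -/
noncomputable def lift (f : ∀ A : FGSubalgebra k K, A.1 →ₐ[k] B)
    (hf : ∀ (A A' : FGSubalgebra k K) (h : A.1 ≤ A'.1),
      f A = (f A').comp (Subalgebra.inclusion h)) : K →ₐ[k] B :=
  (Subalgebra.iSupLift (fun A : FGSubalgebra k K ↦ A.1)
    (directed_of_isDirected_le fun _ _ h ↦ h) f hf ⊤ (iSup_eq_top k K).ge).comp
    Subalgebra.topEquiv.symm.toAlgHom

lemma lift_comp_val (f : ∀ A : FGSubalgebra k K, A.1 →ₐ[k] B)
    (hf : ∀ (A A' : FGSubalgebra k K) (h : A.1 ≤ A'.1), f A = (f A').comp (Subalgebra.inclusion h))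
    (A : FGSubalgebra k K) : (lift f hf).comp A.1.val = f A :=
  Subalgebra.iSupLift_comp_inclusion (fun A : FGSubalgebra k K ↦ A.1)
    (dir := directed_of_isDirected_le fun _ _ h ↦ h) (hf := hf) le_top

lemma algHom_ext {f g : K →ₐ[k] B}
    (h : ∀ A : FGSubalgebra k K, f.comp A.1.val = g.comp A.1.val) : f = g := by
  ext x
  obtain ⟨A, hx⟩ := exists_mem k K x
  exact congr($(h A) ⟨x, hx⟩)

end Lift

section Colimit

variable (k K : Type u) [CommRing k] [CommRing K] [Algebra k K]

/-- The filtered diagram of the finitely generated subalgebras of `K`. -/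
def diagram : FGSubalgebra k K ⥤ CommAlgCat.{u} k where
  obj A := .of k A.1
  map m := CommAlgCat.ofHom (Subalgebra.inclusion (leOfHom m))

/-- The inclusions into `K` of its finitely generated subalgebras. -/
def cocone : Cocone (diagram k K) where
  pt := .of k K
  ι := { app A := CommAlgCat.ofHom A.1.val }

/-- An algebra is the colimit of its finitely generated subalgebras. -/
noncomputable def isColimitCocone : IsColimit (cocone k K) where
  desc s :=
    CommAlgCat.ofHom <| lift (fun A ↦ (s.ι.app A).hom) fun A A' h ↦
      congr(($(s.w (homOfLE h : A ⟶ A'))).hom).symm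
  fac _ A := CommAlgCat.hom_ext <| lift_comp_val _ _ A
  uniq _ _ hf := CommAlgCat.hom_ext <| Eq.symm <| algHom_ext fun A ↦
    (lift_comp_val _ _ A).trans congr(($(hf A)).hom).symm

end Colimit

end FGSubalgebra

lemma exists_algHom_of_finiteType (k A : Type*) [Field k] [IsAlgClosed k] [CommRing A]
    [Nontrivial A] [Algebra k A] [Algebra.FiniteType k A] : Nonempty (A →ₐ[k] k) := by
  obtain ⟨m, hm⟩ := Ideal.exists_maximal A
  let := Ideal.Quotient.field m
  have : Module.Finite k (A ⧸ m) := finite_of_finite_type_of_isJacobsonRing k (A ⧸ m)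
  exact ⟨(IsAlgClosed.lift : A ⧸ m →ₐ[k] k).comp (Ideal.Quotient.mkₐ k m)⟩

end Algebra

section BaseChange

attribute [local instance] Over.cartesianMonoidalCategory

/-- `Spec K` is the limit of the spectra of the finitely generated subalgebras of `K`. -/
noncomputable def isLimitAlgSpecFGSubalgebra (k K : Type u) [CommRing k] [CommRing K]
    [Algebra k K] : IsLimit ((algSpec (.of k)).mapCone (FGSubalgebra.cocone k K).op) :=
  have := preservesLimitsOfSize_algSpec.{u, u} (R := .of k)
  have : PreservesLimit (FGSubalgebra.diagram k K).op (algSpec (.of k)) := inferInstance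
  isLimitOfPreserves _ (FGSubalgebra.isColimitCocone k K).op

variable {k K : Type u}

/-- The `k`-rational point of `Spec A` given by a homomorphism `A →ₐ[k] k`. -/
noncomputable def algSpecPoint {A : Type u} [CommRing k] [CommRing A] [Algebra k A]
    (φ : A →ₐ[k] k) : 𝟙_ (Over (Spec (.of k))) ⟶ (algSpec (.of k)).obj (op (.of k A)) :=
  have h : Spec.map (CommRingCat.ofHom φ.toRingHom) ≫
      Spec.map (CommRingCat.ofHom (algebraMap k A)) = 𝟙 (Spec (.of k)) := by
    rw [← Spec.map_comp, ← CommRingCat.ofHom_comp, AlgHom.toRingHom_eq_coe, φ.comp_algebraMap]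
    exact Spec.map_id _
  Over.homMk (Spec.map (CommRingCat.ofHom φ.toRingHom)) h

theorem nonempty_iso_of_baseChange_iso_of_retractions [CommRing k] [CommRing K] [Algebra k K]
    (hK : ∀ A : Subalgebra k K, A.FG → Nonempty (A →ₐ[k] k)) {X Y : Over (Spec (.of k))}
    [QuasiCompact X.hom] [QuasiSeparated X.hom] [LocallyOfFinitePresentation X.hom]
    [QuasiCompact Y.hom] [QuasiSeparated Y.hom] [LocallyOfFinitePresentation Y.hom]
    (e : X ⊗ (algSpec (.of k)).obj (op (.of k K)) ≅ Y ⊗ (algSpec (.of k)).obj (op (.of k K)))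
    (he : e.hom ≫ snd _ _ = snd _ _) : Nonempty (X ≅ Y) := by
  let D := (FGSubalgebra.diagram k K).op ⋙ algSpec (.of k)
  have (A : (FGSubalgebra k K)ᵒᵖ) : IsAffine (D.obj A).left := inferInstanceAs (IsAffine (Spec _))
  have {A B : (FGSubalgebra k K)ᵒᵖ} (m : A ⟶ B) : IsAffineHom (D.map m).left := inferInstance
  exact nonempty_iso_of_tensor_iso_of_isLimit (D := D) (isLimitAlgSpecFGSubalgebra k K)
    (fun A ↦ (hK A.unop.1 A.unop.2).map algSpecPoint) e he

theorem nonempty_iso_of_baseChange_iso [Field k] [IsAlgClosed k] [CommRing K] [Nontrivial K]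
    [Algebra k K] {X Y : Over (Spec (.of k))}
    [LocallyOfFiniteType X.hom] [QuasiCompact X.hom]
    [LocallyOfFiniteType Y.hom] [QuasiCompact Y.hom]
    (e : X ⊗ (algSpec (.of k)).obj (op (.of k K)) ≅ Y ⊗ (algSpec (.of k)).obj (op (.of k K)))
    (he : e.hom ≫ snd _ _ = snd _ _) : Nonempty (X ≅ Y) := by
  have := LocallyOfFiniteType.isLocallyNoetherian X.hom
  have := LocallyOfFiniteType.isLocallyNoetherian Y.hom
  have : LocallyOfFinitePresentation X.hom :=
    LocallyOfFinitePresentation.iff_locallyOfFiniteType.mpr ‹_›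
  have : LocallyOfFinitePresentation Y.hom :=
    LocallyOfFinitePresentation.iff_locallyOfFiniteType.mpr ‹_›
  refine nonempty_iso_of_baseChange_iso_of_retractions (fun A hA ↦ ?_) e he
  have := A.fg_iff_finiteType.mp hA
  exact exists_algHom_of_finiteType k A

theorem isomorphic_of_baseChange_isomorphic_general
    {k K : Type u} [Field k] [IsAlgClosed k] [CommRing K] [Nontrivial K] [Algebra k K]
    (V W : Scheme.{u}) (f : V ⟶ Spec (CommRingCat.of k)) (g : W ⟶ Spec (CommRingCat.of k))
    [LocallyOfFiniteType f] [QuasiCompact f] [LocallyOfFiniteType g] [QuasiCompact g]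
    (e : pullback f (Spec.map (CommRingCat.ofHom (algebraMap k K))) ≅
      pullback g (Spec.map (CommRingCat.ofHom (algebraMap k K))))
    (he : e.hom ≫ pullback.snd g (Spec.map (CommRingCat.ofHom (algebraMap k K))) =
      pullback.snd f (Spec.map (CommRingCat.ofHom (algebraMap k K)))) :
    ∃ e₀ : V ≅ W, e₀.hom ≫ g = f := by
  let X := Over.mk f
  let Y := Over.mk g
  let T := (algSpec (.of k)).obj (op (.of k K))
  have : LocallyOfFiniteType X.hom := ‹LocallyOfFiniteType f›
  have : LocallyOfFiniteType Y.hom := ‹LocallyOfFiniteType g›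
  have : QuasiCompact X.hom := ‹QuasiCompact f›
  have : QuasiCompact Y.hom := ‹QuasiCompact g›
  have hX : (X ⊗ T).hom = (snd X T).left ≫ T.hom := (Over.w (snd X T)).symm
  have hY : (Y ⊗ T).hom = (snd Y T).left ≫ T.hom := (Over.w (snd Y T)).symm
  let eT : X ⊗ T ≅ Y ⊗ T := Over.isoMk e (by rw [hX, hY]; exact congr($he ≫ T.hom))
  obtain ⟨e₀⟩ := nonempty_iso_of_baseChange_iso eT (Over.OverMorphism.ext he)
  exact ⟨(Over.forget _).mapIso e₀, Over.w e₀.hom⟩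

end BaseChange

/-- Let `k` be an algebraically closed field, `V` and `W` algebraic schemes
(separated and of finite type) over `k`, and `K` a field extension of `k`.  If
`V ×_{Spec k} Spec K` and `W ×_{Spec k} Spec K` are isomorphic as `K`-schemes,
then `V` and `W` are isomorphic as `k`-schemes. -/
theorem isomorphic_of_baseChange_isomorphic
    {k K : Type u} [Field k] [IsAlgClosed k] [Field K] [Algebra k K]
    (V W : Scheme.{u}) (f : V ⟶ Spec (CommRingCat.of k))
    (g : W ⟶ Spec (CommRingCat.of k))
    [IsSeparated f] [LocallyOfFiniteType f] [QuasiCompact f]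
    [IsSeparated g] [LocallyOfFiniteType g] [QuasiCompact g]
    (e : pullback f (Spec.map (CommRingCat.ofHom (algebraMap k K))) ≅
         pullback g (Spec.map (CommRingCat.ofHom (algebraMap k K))))
    (he : e.hom ≫ pullback.snd g (Spec.map (CommRingCat.ofHom (algebraMap k K))) =
      pullback.snd f (Spec.map (CommRingCat.ofHom (algebraMap k K)))) :
    ∃ e₀ : V ≅ W, e₀.hom ≫ g = f := by
  exact isomorphic_of_baseChange_isomorphic_general V W f g e he
end

section
/- Let f : A → B be a faithfully flat homomorphism of commutative rings. Then: (i) f is injective; (ii) the kernel of the map B → B ⊗_A B, b ↦ b ⊗ 1 − 1 ⊗ b, equals the image of f; and (iii) the kernel of the map d¹ : B ⊗_A B → B ⊗_A B ⊗_A B defined by d¹(b₀ ⊗ b₁) = 1 ⊗ b₀ ⊗ b₁ − b₀ ⊗ 1 ⊗ b₁ + b₀ ⊗ b₁ ⊗ 1 equals the image of the map d⁰ : B → B ⊗_A B, b ↦ 1 ⊗ b − b ⊗ 1. -/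
open scoped TensorProduct

/-!
Exactness may be tested after applying `B ⊗[A] -`. There the multiplication
`x ⊗ (b ⊗ n) ↦ xb ⊗ n` splits the unit `n ↦ 1 ⊗ n`. Each Amitsur differential is this unit minus
`id ⊗ (previous differential)`, and the multiplication commutes with `id ⊗ f` for every `f`, so it
is a contracting homotopy.
-/

section Homotopy

variable {R M N P : Type*} [Semiring R] [AddCommMonoid M] [AddCommMonoid N] [AddCommMonoid P]
  [Module R M] [Module R N] [Module R P]

theorem exact_of_homotopy {f : M →ₗ[R] N} {g : N →ₗ[R] P} (hgf : g ∘ₗ f = 0)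
    (s : N →ₗ[R] M) (t : P →ₗ[R] N) (hst : f ∘ₗ s + t ∘ₗ g = LinearMap.id) :
    Function.Exact f g := by
  refine LinearMap.exact_of_comp_of_mem_range hgf fun y hy ↦ ⟨s y, ?_⟩
  simpa only [LinearMap.add_apply, LinearMap.comp_apply, hy, map_zero, add_zero,
    LinearMap.id_apply] using LinearMap.congr_fun hst y

end Homotopy

section MulContraction

variable (A B M : Type*) {N : Type*} [CommSemiring A] [Semiring B] [Algebra A B]
  [AddCommMonoid M] [Module A M] [AddCommMonoid N] [Module A N]

/-- The multiplication `x ⊗ (b ⊗ m) ↦ xb ⊗ m`, which provides the contracting homotopy of the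
Amitsur complex after base change to `B`. -/
noncomputable def mulContraction : B ⊗[A] (B ⊗[A] M) →ₗ[A] B ⊗[A] M :=
  (LinearMap.mul' A B).rTensor M ∘ₗ (TensorProduct.assoc A B B M).symm.toLinearMap

variable {A B M}

@[simp]
theorem mulContraction_tmul (x b : B) (m : M) :
    mulContraction A B M (x ⊗ₜ (b ⊗ₜ m)) = (x * b) ⊗ₜ m := by
  simp [mulContraction]

theorem mulContraction_comp_lTensor_mk_one :
    mulContraction A B M ∘ₗ (TensorProduct.mk A B M 1).lTensor B = LinearMap.id := by
  ext
  simp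

theorem mulContraction_comp_lTensor_lTensor (f : M →ₗ[A] N) :
    mulContraction A B N ∘ₗ (f.lTensor B).lTensor B = f.lTensor B ∘ₗ mulContraction A B M := by
  ext
  simp

end MulContraction

section FaithfullyFlat

variable (A B : Type*) [CommRing A] [Ring B] [Algebra A B] [Module.FaithfullyFlat A B]

theorem mk_one_injective_of_faithfullyFlat (M : Type*) [AddCommGroup M] [Module A M] :
    Function.Injective (TensorProduct.mk A B M 1) :=
  (Module.FaithfullyFlat.lTensor_injective_iff_injective A B _).mp <|
    Function.LeftInverse.injective (g := mulContraction A B M)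
      (LinearMap.congr_fun mulContraction_comp_lTensor_mk_one)

theorem algebraMap_injective_of_faithfullyFlat : Function.Injective (algebraMap A B) := by
  have rid_comp_mk_one :
      algebraMap A B = TensorProduct.rid A B ∘ TensorProduct.mk A B A 1 := by
    ext a
    simp [Algebra.algebraMap_eq_smul_one]
  rw [rid_comp_mk_one]
  exact (TensorProduct.rid A B).injective.comp (mk_one_injective_of_faithfullyFlat A B A)

end FaithfullyFlat

section AmitsurDifferential

variable {A B M N : Type*} [CommRing A] [Ring B] [Algebra A B]
  [AddCommGroup M] [Module A M] [AddCommGroup N] [Module A N]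

/-- The Amitsur differential `n ↦ 1 ⊗ n - (id ⊗ f) (i n)` that follows `f : M → N`. In the Amitsur
complex `N` is `B ⊗[A] M` and `i` is the identity; a general `i` also allows `M = A`, `N = B`,
`i b = b ⊗ 1`. Iterating with `i = id` gives the alternating sums of the maps inserting a `1`. -/
noncomputable def amitsurDifferential (i : N →ₗ[A] B ⊗[A] M) (f : M →ₗ[A] N) : N →ₗ[A] B ⊗[A] N :=
  TensorProduct.mk A B N 1 - f.lTensor B ∘ₗ i

theorem lTensor_amitsurDifferential_homotopy (i : N →ₗ[A] B ⊗[A] M) (f : M →ₗ[A] N) :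
    f.lTensor B ∘ₗ mulContraction A B M ∘ₗ i.lTensor B +
      mulContraction A B N ∘ₗ (amitsurDifferential i f).lTensor B = LinearMap.id := by
  rw [amitsurDifferential, LinearMap.lTensor_sub, LinearMap.lTensor_comp, LinearMap.comp_sub,
    mulContraction_comp_lTensor_mk_one, ← LinearMap.comp_assoc, ← LinearMap.comp_assoc,
    mulContraction_comp_lTensor_lTensor]
  exact add_sub_cancel (f.lTensor B ∘ₗ mulContraction A B M ∘ₗ i.lTensor B) LinearMap.id

theorem exact_amitsurDifferential [Module.FaithfullyFlat A B] {i : N →ₗ[A] B ⊗[A] M}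
    {f : M →ₗ[A] N} (h : amitsurDifferential i f ∘ₗ f = 0) :
    Function.Exact f (amitsurDifferential i f) := by
  refine Module.FaithfullyFlat.lTensor_reflects_exact A B _ _ ?_
  refine exact_of_homotopy ?_ _ _ (lTensor_amitsurDifferential_homotopy i f)
  rw [← LinearMap.lTensor_comp, h, LinearMap.lTensor_zero]

theorem amitsurDifferential_comp_self {i : N →ₗ[A] B ⊗[A] M} {f : M →ₗ[A] N}
    (h : amitsurDifferential i f ∘ₗ f = 0) :
    amitsurDifferential LinearMap.id (amitsurDifferential i f) ∘ₗ amitsurDifferential i f = 0 := by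
  ext n
  set d := amitsurDifferential i f
  have lTensor_d_d : d.lTensor B (d n) = 1 ⊗ₜ d n :=
    calc d.lTensor B (d n) = d.lTensor B (1 ⊗ₜ n) - d.lTensor B (f.lTensor B (i n)) :=
          map_sub (d.lTensor B) (1 ⊗ₜ n) (f.lTensor B (i n))
      _ = 1 ⊗ₜ d n := by
          rw [← LinearMap.lTensor_comp_apply, h, LinearMap.lTensor_zero, LinearMap.zero_apply,
            sub_zero, LinearMap.lTensor_tmul]
  exact sub_eq_zero.mpr lTensor_d_d.symm

end AmitsurDifferential

section LowDegrees

variable (A B : Type*) [CommRing A] [Ring B] [Algebra A B]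

theorem amitsurDifferential_linearMap :
    amitsurDifferential ((TensorProduct.mk A B A).flip 1) (Algebra.linearMap A B) =
      TensorProduct.mk A B B 1 - (TensorProduct.mk A B B).flip 1 := by
  ext
  simp [amitsurDifferential]

theorem amitsurDifferential_mk_one_sub_flip :
    amitsurDifferential LinearMap.id
        (TensorProduct.mk A B B 1 - (TensorProduct.mk A B B).flip 1) =
      TensorProduct.mk A B (B ⊗[A] B) 1
        - TensorProduct.map LinearMap.id (TensorProduct.mk A B B 1)
        + TensorProduct.map LinearMap.id ((TensorProduct.mk A B B).flip 1) := by
  rw [amitsurDifferential, LinearMap.comp_id, LinearMap.lTensor_sub]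
  exact (sub_add (TensorProduct.mk A B (B ⊗[A] B) 1) _ _).symm

theorem amitsurDifferential_linearMap_comp :
    amitsurDifferential ((TensorProduct.mk A B A).flip 1) (Algebra.linearMap A B) ∘ₗ
      Algebra.linearMap A B = 0 := by
  rw [amitsurDifferential_linearMap]
  ext
  simp

theorem amitsur_exactness_low_degrees_general [Module.FaithfullyFlat A B] :
    Function.Injective (algebraMap A B) ∧
    LinearMap.ker ((TensorProduct.mk A B B).flip 1 - TensorProduct.mk A B B 1) =
      LinearMap.range (Algebra.linearMap A B) ∧
    LinearMap.ker
        ((TensorProduct.mk A B (B ⊗[A] B) 1 :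
            B ⊗[A] B →ₗ[A] B ⊗[A] (B ⊗[A] B))
          - TensorProduct.map LinearMap.id (TensorProduct.mk A B B 1)
          + TensorProduct.map LinearMap.id ((TensorProduct.mk A B B).flip 1)) =
      LinearMap.range (TensorProduct.mk A B B 1 - (TensorProduct.mk A B B).flip 1) := by
  have d_comp_linearMap := amitsurDifferential_linearMap_comp A B
  have exact_B := exact_amitsurDifferential d_comp_linearMap
  have exact_BB := exact_amitsurDifferential (amitsurDifferential_comp_self d_comp_linearMap)
  rw [amitsurDifferential_linearMap, LinearMap.exact_iff] at exact_B
  rw [amitsurDifferential_linearMap, amitsurDifferential_mk_one_sub_flip,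
    LinearMap.exact_iff] at exact_BB
  refine ⟨algebraMap_injective_of_faithfullyFlat A B, ?_, exact_BB⟩
  rw [← neg_sub, LinearMap.ker_neg, exact_B]

end LowDegrees

/-- Let `A → B` be a faithfully flat homomorphism of commutative rings.  Then
(i) `A → B` is injective; (ii) the kernel of `b ↦ b ⊗ 1 - 1 ⊗ b : B → B ⊗[A] B`
is the image of `A`; (iii) the kernel of
`d¹ : B ⊗[A] B → B ⊗[A] B ⊗[A] B`, `b₀ ⊗ b₁ ↦ 1⊗b₀⊗b₁ - b₀⊗1⊗b₁ + b₀⊗b₁⊗1`,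
is the image of `d⁰ : B → B ⊗[A] B`, `b ↦ 1⊗b - b⊗1`. -/
theorem amitsur_exactness_low_degrees
    (A B : Type u) [CommRing A] [CommRing B] [Algebra A B]
    [Module.FaithfullyFlat A B] :
    Function.Injective (algebraMap A B) ∧
    LinearMap.ker ((TensorProduct.mk A B B).flip 1 - TensorProduct.mk A B B 1) =
      LinearMap.range (Algebra.linearMap A B) ∧
    LinearMap.ker
        ((TensorProduct.mk A B (B ⊗[A] B) 1 :
            B ⊗[A] B →ₗ[A] B ⊗[A] (B ⊗[A] B))
          - TensorProduct.map LinearMap.id (TensorProduct.mk A B B 1)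
          + TensorProduct.map LinearMap.id ((TensorProduct.mk A B B).flip 1)) =
      LinearMap.range (TensorProduct.mk A B B 1 - (TensorProduct.mk A B B).flip 1) :=
  amitsur_exactness_low_degrees_general A B
end
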